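/- arXiv:1812.11259 — 2 statements merged into one kernel-verified Lean document; each statement's English description precedes it below -/
import Mathlib

section
/- A *-distribution μ on ℂ⟨Z_l, Z_{l*}, Z_r, Z_{r*}⟩ is η-diagonal if and only if both of the following hold: (i) μ(Z_w) = 0 for every word w ∈ W⁺ that is not mixed alternating; and (ii) for every mixed alternating word w with canonical factorization determining the bi-interval partition π_w = {J₁, …, J_d}, one has μ(Z_w) = μ(Z_{w|_{J₁}}) ⋯ μ(Z_{w|_{J_d}}). -/
open scoped BigOperators

/-- Rank realizing the χ-order: left indices in increasing order, then right indices
in decreasing order. `true` stands for `l`, `false` for `r`. -/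
def chiRank {n : ℕ} (χ : Fin n → Bool) (i : Fin n) : ℕ :=
  if χ i then (i : ℕ) else 2 * n - (i : ℕ)

/-- The strict order `≺_χ`. -/
def chiLT {n : ℕ} (χ : Fin n → Bool) (i j : Fin n) : Prop :=
  chiRank χ i < chiRank χ j

/-- A finset is a χ-interval iff it is order-convex for `≺_χ`. -/
def IsChiInterval {n : ℕ} (χ : Fin n → Bool) (V : Finset (Fin n)) : Prop :=
  ∀ i j k : Fin n, i ∈ V → k ∈ V → chiLT χ i j → chiLT χ j k → j ∈ V

/-- A set partition of `{1, …, n}` encoded as a finset of (nonempty) blocks. -/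
def IsPartition {n : ℕ} (P : Finset (Finset (Fin n))) : Prop :=
  (∅ ∉ P) ∧ ∀ i : Fin n, ∃! V : Finset (Fin n), V ∈ P ∧ i ∈ V

open scoped Classical in
/-- The set of bi-interval partitions relative to χ. -/
noncomputable def BIset {n : ℕ} (χ : Fin n → Bool) : Finset (Finset (Finset (Fin n))) :=
  Finset.univ.filter (fun P => IsPartition P ∧ ∀ V ∈ P, IsChiInterval χ V)

/-- `φ_V(a₁,…,aₙ)`: apply φ to the product of the `a_i`, `i ∈ V`, in increasing index order. -/
def phiV {A : Type*} [Monoid A] (φ : A → ℂ) {n : ℕ} (a : Fin n → A) (V : Finset (Fin n)) : ℂ :=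
  φ ((V.sort (· ≤ ·)).map a).prod

/-- The Boolean (l,r)-cumulant `B_χ`. -/
noncomputable def Bcum {A : Type*} [Monoid A] (φ : A → ℂ) {n : ℕ} (χ : Fin n → Bool)
    (a : Fin n → A) : ℂ :=
  ∑ P ∈ BIset χ, (-1 : ℂ) ^ (P.card - 1) * ∏ V ∈ P, phiV φ a V

/-- The list of indices `1, …, n` sorted in the `≺_χ` order. -/
def chiSorted {n : ℕ} (χ : Fin n → Bool) : List (Fin n) :=
  (List.finRange n).mergeSort (fun i j => chiRank χ i ≤ chiRank χ j)

/-- Letters of the alphabet `{l, l*, r, r*}`: first component `true` = left (`l`-type),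
second component `true` = starred. -/
abbrev Letter := Bool × Bool

/-- The left/right shape of a word. -/
def chiW {n : ℕ} (w : Fin n → Letter) : Fin n → Bool := fun i => (w i).1

/-- The monomial `Z_w` in the free algebra on the four generators. -/
noncomputable def Zword {n : ℕ} (w : Fin n → Letter) : FreeAlgebra ℂ Letter :=
  (List.ofFn (fun i => FreeAlgebra.ι ℂ (w i))).prod

/-- The monomial `Z_{w|_V}`, the letters of `w` at positions in `V`,
multiplied in increasing index order. -/
noncomputable def ZwordOn {n : ℕ} (w : Fin n → Letter) (V : Finset (Fin n)) :
    FreeAlgebra ℂ Letter :=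
  ((V.sort (· ≤ ·)).map (fun i => FreeAlgebra.ι ℂ (w i))).prod

/-- The Boolean (l,r)-cumulant `B_{χ_w}(Z_w)` of a `*`-distribution `μ` at the word `w`. -/
noncomputable def BcumW (μ : FreeAlgebra ℂ Letter → ℂ) {n : ℕ} (w : Fin n → Letter) : ℂ :=
  Bcum μ (chiW w) (fun i => FreeAlgebra.ι ℂ (w i))

/-- The sequence of star-parities of the letters of `w`, rearranged in the `≺_{χ_w}` order. -/
def wordStarSeq {n : ℕ} (w : Fin n → Letter) : List Bool :=
  (chiSorted (chiW w)).map (fun i => (w i).2)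

/-- A word is alternating: even length, and in the rearranged word starred and unstarred
letters alternate (all `l`-letters automatically precede all `r`-letters in the
rearranged word). -/
def AlternatingW {n : ℕ} (w : Fin n → Letter) : Prop :=
  Even n ∧ (wordStarSeq w).Chain' (· ≠ ·)

/-- `chunks` is the canonical factorization of the rearranged word of `w`: a concatenation
of nonempty consecutive blocks, each of alternating shape (even length, star-parities
alternating), with the classes (star-parity of the first letter) of consecutive blocks
distinct. -/
def IsCanonFact {n : ℕ} (w : Fin n → Letter) (chunks : List (List (Fin n))) : Prop :=
  chunks.flatten = chiSorted (chiW w) ∧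
  (∀ c ∈ chunks, c ≠ [] ∧ Even c.length ∧ (c.map (fun i => (w i).2)).Chain' (· ≠ ·)) ∧
  chunks.Chain' (fun c c' =>
    (c.map (fun i => (w i).2)).head? ≠ (c'.map (fun i => (w i).2)).head?)

/-- A word is mixed alternating if its rearranged word admits a canonical factorization
into blocks of alternating shape with alternating classes. -/
def MixedAlternatingW {n : ℕ} (w : Fin n → Letter) : Prop :=
  ∃ chunks : List (List (Fin n)), IsCanonFact w chunks

/-- A `*`-distribution is η-diagonal if its Boolean (l,r)-cumulants vanish at every
non-alternating word. -/
def EtaDiagonalDist (μ : FreeAlgebra ℂ Letter → ℂ) : Prop :=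
  ∀ n : ℕ, 1 ≤ n → ∀ w : Fin n → Letter, ¬ AlternatingW w → BcumW μ w = 0

/-!
Write `f` and `b` for the moments and the Boolean cumulants of the subwords of a word, listed in the
`≺_χ` order. Splitting off the first block of an interval partition gives the recursion
`f s = ∑ b (s.take k) * f (s.drop k)`, `1 ≤ k ≤ s.length`, which determines `b` from `f`. It can be
applied to all subwords at once, because passing to a subword respects the order `≺_χ`.

If `b` vanishes off the alternating words, a nonzero term of the recursion splits an alternating
prefix off `s`, so a nonzero moment forces `s` to be mixed alternating. If `s = c ++ t` with `c`
alternating and alternation breaks between `c` and `t`, no alternating prefix of `s` reaches past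
`c`, and the recursion for `s` becomes that for `c` times `f t`, whence `f s = f c * f t`.

Conversely, assume (i) and (ii) and let `s` be a non-alternating word such that `b` vanishes at all
shorter ones. The terms of the recursion for `s` other than `b s` then add up to `0 = f s` if `s` is
not mixed alternating, and to `f c * f t = f s` if `s = c ++ t` as above. Hence `b s = 0`.
-/

/-- A list of star-parities of alternating shape: even length, adjacent entries distinct. -/
def IsAlternating (l : List Bool) : Prop :=
  Even l.length ∧ l.IsChain (· ≠ ·)

/-- The star-parities of a mixed alternating word, encoded as a concatenation of pairs of distinct
entries. By `isMixedAlternating_iff_exists_isCanonical` these are the lists that admit a canonical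
factorization. -/
def IsMixedAlternating : List Bool → Prop
  | [] => True
  | [_] => False
  | x :: y :: l => x ≠ y ∧ IsMixedAlternating l

/-- The boundary between two consecutive factors `c` and `t` is a cut if alternation breaks there.
It is automatically one if `c` or `t` is empty. -/
def IsCut (c t : List Bool) : Prop :=
  ∀ x ∈ c.getLast?, ∀ y ∈ t.head?, x = y

/-- The blocks of a canonical factorization, as lists of star-parities. The class of a block is
its first entry. -/
def IsCanonical (L : List (List Bool)) : Prop :=
  (∀ c ∈ L, c ≠ [] ∧ IsAlternating c) ∧ L.IsChain fun c c' => c.head? ≠ c'.head?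

theorem IsMixedAlternating.append :
    ∀ {c t : List Bool}, IsMixedAlternating c → IsMixedAlternating t → IsMixedAlternating (c ++ t)
  | [], _, _, ht => ht
  | [_], _, hc, _ => hc.elim
  | _ :: _ :: _, _, hc, ht => ⟨hc.1, hc.2.append ht⟩

theorem IsMixedAlternating.of_append_of_isCut :
    ∀ {c t : List Bool}, IsMixedAlternating (c ++ t) → IsCut c t →
      IsMixedAlternating c ∧ IsMixedAlternating t
  | [], _, h, _ => ⟨trivial, h⟩
  | [_], [], h, _ => h.elim
  | [x], y :: _, h, hcut => (h.1 (hcut x rfl y rfl)).elim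
  | _ :: _ :: c, _, h, hcut =>
    have ih := of_append_of_isCut (c := c) h.2 fun x hx => hcut x (by
      cases c with
      | nil => simp at hx
      | cons z c => simpa using hx)
    ⟨⟨h.1, ih.1⟩, ih.2⟩

theorem IsAlternating.isMixedAlternating : ∀ {c : List Bool}, IsAlternating c → IsMixedAlternating c
  | [], _ => trivial
  | [_], h => absurd h.1 (by simp)
  | x :: y :: c, ⟨hlen, hchain⟩ => by
    rw [List.isChain_cons_cons] at hchain
    exact ⟨hchain.1, isMixedAlternating ⟨by simpa [Nat.even_add_one] using hlen, hchain.2.tail⟩⟩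

theorem IsAlternating.cons_cons {x y z : Bool} {c : List Bool} (hc : IsAlternating (z :: c))
    (hxy : x ≠ y) (hyz : y ≠ z) : IsAlternating (x :: y :: z :: c) :=
  ⟨by simpa [Nat.even_add_one] using hc.1, by simpa [hxy, hyz] using hc.2⟩

theorem IsAlternating.drop {c : List Bool} (hc : IsAlternating c) {k : ℕ}
    (hk : IsAlternating (c.take k)) : IsAlternating (c.drop k) := by
  have hlen := hc.1
  rw [← List.take_append_drop k c, List.length_append, Nat.even_add] at hlen
  exact ⟨hlen.1 hk.1, hc.2.drop k⟩

theorem getLast_eq_ite_of_isChain_ne :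
    ∀ {x : Bool} {l : List Bool}, (x :: l).IsChain (· ≠ ·) →
      (x :: l).getLast (List.cons_ne_nil x l) = if Even l.length then x else !x
  | x, [], _ => by simp
  | x, y :: l, h => by
    rw [List.isChain_cons_cons] at h
    rw [List.getLast_cons_cons, getLast_eq_ite_of_isChain_ne h.2, List.length_cons,
      Bool.eq_not_of_ne h.1.symm]
    simp only [Bool.not_not, Nat.even_add_one, ite_not]

theorem IsAlternating.isCut_iff_head?_ne {c t : List Bool} (hc : IsAlternating c) (hne : c ≠ []) :
    IsCut c t ↔ c.head? ≠ t.head? := by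
  obtain ⟨x, c, rfl⟩ := List.exists_cons_of_ne_nil hne
  have hlast := getLast_eq_ite_of_isChain_ne hc.2
  have hlen : ¬ Even c.length := by simpa [Nat.even_add_one] using hc.1
  cases t with
  | nil => simp [IsCut]
  | cons y t =>
    rw [IsCut, List.getLast?_eq_some_getLast (List.cons_ne_nil x c), hlast, if_neg hlen]
    cases x <;> cases y <;> simp

theorem IsCut.drop {c t : List Bool} (h : IsCut c t) (k : ℕ) : IsCut (c.drop k) t := by
  intro x hx
  rw [List.getLast?_drop] at hx
  split_ifs at hx
  · simp at hx
  · exact h x hx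

theorem IsCut.not_isAlternating_append_take {c t : List Bool} (h : IsCut c t) (hc : c ≠ [])
    (ht : t ≠ []) (k : ℕ) : ¬ IsAlternating (c ++ t.take (k + 1)) := by
  obtain ⟨y, t, rfl⟩ := List.exists_cons_of_ne_nil ht
  intro halt
  have hx := List.getLast_mem_getLast? hc
  exact (List.isChain_append.1 halt.2).2.2 _ hx y rfl (h _ hx y rfl)

theorem IsMixedAlternating.exists_eq_append :
    ∀ {l : List Bool}, IsMixedAlternating l → l ≠ [] →
      ∃ c t, l = c ++ t ∧ c ≠ [] ∧ IsAlternating c ∧ IsCut c t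
  | [], _, hl => absurd rfl hl
  | [_], h, _ => h.elim
  | [x, y], h, _ =>
    ⟨[x, y], [], by simp, by simp, by simpa [IsAlternating] using h.1, by simp [IsCut]⟩
  | x :: y :: z :: l, h, _ => by
    by_cases hyz : y = z
    · exact ⟨[x, y], z :: l, rfl, by simp, by simpa [IsAlternating] using h.1,
        by simpa [IsCut] using hyz⟩
    obtain ⟨c, t, hl, hc, halt, hcut⟩ := exists_eq_append h.2 (List.cons_ne_nil z l)
    obtain ⟨z', c, rfl⟩ := List.exists_cons_of_ne_nil hc
    obtain ⟨rfl, rfl⟩ : z = z' ∧ l = c ++ t := by simpa using hl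
    exact ⟨x :: y :: z :: c, t, rfl, by simp, halt.cons_cons h.1 hyz,
      by simpa [IsCut] using hcut⟩

theorem isCanonical_cons {c : List Bool} {L : List (List Bool)} :
    IsCanonical (c :: L) ↔ (c ≠ [] ∧ IsAlternating c) ∧ IsCut c L.flatten ∧ IsCanonical L := by
  simp only [IsCanonical, List.forall_mem_cons, List.isChain_cons, and_assoc]
  refine and_congr_right fun hne => and_congr_right fun halt => ?_
  rw [halt.isCut_iff_head?_ne hne, ← and_assoc, ← and_assoc, and_comm (a := ∀ d ∈ L, _)]
  refine and_congr_left fun _ => and_congr_left fun hL => ?_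
  cases L with
  | nil => simpa using hne
  | cons d L =>
    obtain ⟨y, d, rfl⟩ := List.exists_cons_of_ne_nil (hL d List.mem_cons_self).1
    simp

theorem IsMixedAlternating.exists_isCanonical {l : List Bool} (h : IsMixedAlternating l) :
    ∃ L : List (List Bool), L.flatten = l ∧ IsCanonical L := by
  induction hN : l.length using Nat.strong_induction_on generalizing l with
  | _ N ih =>
    rcases eq_or_ne l [] with rfl | hl
    · exact ⟨[], rfl, by simp [IsCanonical]⟩
    obtain ⟨c, t, rfl, hc, halt, hcut⟩ := h.exists_eq_append hl
    have hlt : t.length < N := by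
      rw [← hN, List.length_append]
      exact Nat.lt_add_of_pos_left (List.length_pos_iff.2 hc)
    obtain ⟨L, rfl, hL⟩ := ih _ hlt (h.of_append_of_isCut hcut).2 rfl
    exact ⟨c :: L, rfl, isCanonical_cons.2 ⟨⟨hc, halt⟩, hcut, hL⟩⟩

theorem IsCanonical.isMixedAlternating_flatten {L : List (List Bool)} (hL : IsCanonical L) :
    IsMixedAlternating L.flatten := by
  induction L with
  | nil => trivial
  | cons c L ih =>
    obtain ⟨⟨-, halt⟩, -, hL⟩ := isCanonical_cons.1 hL
    exact halt.isMixedAlternating.append (ih hL)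

theorem isMixedAlternating_iff_exists_isCanonical {l : List Bool} :
    IsMixedAlternating l ↔ ∃ L : List (List Bool), L.flatten = l ∧ IsCanonical L :=
  ⟨IsMixedAlternating.exists_isCanonical, by
    rintro ⟨L, rfl, hL⟩
    exact hL.isMixedAlternating_flatten⟩

theorem exists_map_map_eq_of_map_eq_flatten {α β : Type*} {g : α → β} {L : List (List β)}
    {s : List α} (h : s.map g = L.flatten) :
    ∃ L' : List (List α), L'.map (List.map g) = L ∧ L'.flatten = s := by
  induction L generalizing s with
  | nil => exact ⟨[], rfl, by simpa using h.symm⟩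
  | cons c L ih =>
    obtain ⟨c', t, rfl, rfl, ht⟩ := List.map_eq_append_iff.1 h
    obtain ⟨L', rfl, rfl⟩ := ih ht
    exact ⟨c' :: L', rfl, rfl⟩

/-- The Boolean moment–cumulant recursion, which peels off the first block of an interval
partition, for a moment function `f` and a cumulant function `b` on the `r`-sorted lists. -/
structure IsMomentCumulantPair {α R : Type*} [Ring R] (r : α → α → Prop) (f b : List α → R) :
    Prop where
  nil : f [] = 1
  eq_sum : ∀ s : List α, s ≠ [] → s.Pairwise r →
    f s = ∑ k ∈ Finset.range s.length, b (s.take (k + 1)) * f (s.drop (k + 1))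

section MomentCumulant

variable {α R : Type*} [Ring R]

/-- The list form of η-diagonality: `b` vanishes off the alternating lists, where `p` gives the
star-parity of a letter. -/
def VanishesOffAlternating (p : α → Bool) (r : α → α → Prop) (b : List α → R) : Prop :=
  ∀ s : List α, s.Pairwise r → s ≠ [] → ¬ IsAlternating (s.map p) → b s = 0

/-- The list form of condition (i): `f` vanishes off the mixed alternating lists. -/
def VanishesOffMixedAlternating (p : α → Bool) (r : α → α → Prop) (f : List α → R) : Prop :=
  ∀ s : List α, s.Pairwise r → ¬ IsMixedAlternating (s.map p) → f s = 0

/-- The list form of condition (ii): `f` factorizes along canonical factorizations. -/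
def FactorizesCanonically (p : α → Bool) (r : α → α → Prop) (f : List α → R) : Prop :=
  ∀ L : List (List α), L.flatten.Pairwise r → IsCanonical (L.map (List.map p)) →
    f L.flatten = (L.map f).prod

/-- A variant of `FactorizesCanonically` suited to induction, which splits off one alternating
factor that ends at a cut and lets the rest of the list be arbitrary. -/
def MultiplicativeAtCuts (p : α → Bool) (r : α → α → Prop) (f : List α → R) : Prop :=
  ∀ c t : List α, (c ++ t).Pairwise r → IsAlternating (c.map p) → IsCut (c.map p) (t.map p) →
    f (c ++ t) = f c * f t

variable {p : α → Bool} {r : α → α → Prop} {f b : List α → R}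

theorem mul_eq_zero_of_not_isMixedAlternating {s : List α} {k : ℕ}
    (hs : ¬ IsMixedAlternating (s.map p))
    (hb : ¬ IsAlternating ((s.take k).map p) → b (s.take k) = 0)
    (hf : ¬ IsMixedAlternating ((s.drop k).map p) → f (s.drop k) = 0) :
    b (s.take k) * f (s.drop k) = 0 := by
  by_cases halt : IsAlternating ((s.take k).map p)
  · rw [hf, mul_zero]
    intro hmix
    refine hs ?_
    rw [← List.take_append_drop k s, List.map_append]
    exact halt.isMixedAlternating.append hmix
  · rw [hb halt, zero_mul]

theorem MultiplicativeAtCuts.factorizesCanonically (hmul : MultiplicativeAtCuts p r f)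
    (hnil : f [] = 1) : FactorizesCanonically p r f := by
  intro L hsort hL
  induction L with
  | nil => simpa using hnil
  | cons c L ih =>
    rw [List.map_cons, isCanonical_cons, ← List.map_flatten] at hL
    obtain ⟨⟨-, halt⟩, hcut, hL⟩ := hL
    rw [List.flatten_cons] at hsort ⊢
    rw [hmul c L.flatten hsort halt hcut, ih (List.pairwise_append.1 hsort).2.1 hL,
      List.map_cons, List.prod_cons]

theorem FactorizesCanonically.multiplicativeAtCuts (hfac : FactorizesCanonically p r f)
    (hvan : VanishesOffMixedAlternating p r f) (hnil : f [] = 1) : MultiplicativeAtCuts p r f := by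
  intro c t hsort halt hcut
  rcases eq_or_ne c [] with rfl | hc
  · rw [List.nil_append, hnil, one_mul]
  have hsort_t := (List.pairwise_append.1 hsort).2.1
  by_cases hmix : IsMixedAlternating (t.map p)
  · obtain ⟨L', hL', hcan⟩ := hmix.exists_isCanonical
    obtain ⟨L, rfl, rfl⟩ := exists_map_map_eq_of_map_eq_flatten hL'.symm
    have hcons : IsCanonical ((c :: L).map (List.map p)) :=
      isCanonical_cons.2 ⟨⟨by simpa using hc, halt⟩, by rwa [hL'], hcan⟩
    rw [hfac L hsort_t hcan, ← List.flatten_cons, hfac (c :: L) hsort hcons, List.map_cons,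
      List.prod_cons]
  · rw [hvan t hsort_t hmix, mul_zero]
    refine hvan _ hsort fun h => hmix ?_
    rw [List.map_append] at h
    exact (h.of_append_of_isCut hcut).2

namespace IsMomentCumulantPair

theorem append_eq (h : IsMomentCumulantPair r f b) {c t : List α} (hsort : (c ++ t).Pairwise r)
    (ht : t ≠ []) :
    f (c ++ t) = ∑ k ∈ Finset.range c.length, b (c.take (k + 1)) * f (c.drop (k + 1) ++ t) +
      ∑ k ∈ Finset.range t.length, b (c ++ t.take (k + 1)) * f (t.drop (k + 1)) := by
  rw [h.eq_sum _ (List.append_ne_nil_of_right_ne_nil c ht) hsort, List.length_append,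
    Finset.sum_range_add]
  congr 1
  · refine Finset.sum_congr rfl fun k hk => ?_
    have hk : k + 1 ≤ c.length := Finset.mem_range.1 hk
    rw [List.take_append_of_le_length hk, List.drop_append_of_le_length hk]
  · simp only [add_assoc, List.take_length_add_append, List.drop_length_add_append]

theorem append_eq_mul_add (h : IsMomentCumulantPair r f b) {c t : List α}
    (hsort : (c ++ t).Pairwise r) (hc : c ≠ []) (ht : t ≠ []) (halt : IsAlternating (c.map p))
    (hb : ∀ k < c.length, ¬ IsAlternating ((c.take (k + 1)).map p) → b (c.take (k + 1)) = 0)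
    (hf : ∀ k < c.length, IsAlternating ((c.drop (k + 1)).map p) →
      f (c.drop (k + 1) ++ t) = f (c.drop (k + 1)) * f t) :
    f (c ++ t) = f c * f t +
      ∑ k ∈ Finset.range t.length, b (c ++ t.take (k + 1)) * f (t.drop (k + 1)) := by
  rw [h.append_eq hsort ht, h.eq_sum c hc (List.pairwise_append.1 hsort).1, Finset.sum_mul]
  congr 1
  refine Finset.sum_congr rfl fun k hk => ?_
  have hk := Finset.mem_range.1 hk
  by_cases hpre : IsAlternating ((c.take (k + 1)).map p)
  · rw [hf k hk (by simpa using halt.drop (by simpa using hpre)), mul_assoc]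
  · rw [hb k hk hpre, zero_mul, zero_mul, zero_mul]

theorem sum_eq_cumulant (h : IsMomentCumulantPair r f b) {c t : List α} (ht : t ≠ [])
    (hz : ∀ k, k + 1 < t.length → b (c ++ t.take (k + 1)) * f (t.drop (k + 1)) = 0) :
    ∑ k ∈ Finset.range t.length, b (c ++ t.take (k + 1)) * f (t.drop (k + 1)) = b (c ++ t) := by
  obtain ⟨m, hm⟩ := Nat.exists_eq_add_one.2 (List.length_pos_iff.2 ht)
  rw [hm, Finset.sum_range_succ, Finset.sum_eq_zero fun k hk => hz k (by grind), ← hm]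
  simp [h.nil]

theorem multiplicativeAtCuts (h : IsMomentCumulantPair r f b)
    (hb : VanishesOffAlternating p r b) : MultiplicativeAtCuts p r f := by
  intro c
  induction hN : c.length using Nat.strong_induction_on generalizing c with
  | _ N ih =>
    intro t hsort halt hcut
    rcases eq_or_ne c [] with rfl | hc
    · simp [h.nil]
    rcases eq_or_ne t [] with rfl | ht
    · simp [h.nil]
    rw [h.append_eq_mul_add hsort hc ht halt, Finset.sum_eq_zero, add_zero]
    · intro k _
      rw [hb _ (hsort.sublist ((List.take_sublist _ t).append_left c)) (by simp [hc]), zero_mul]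
      simpa using hcut.not_isAlternating_append_take (by simpa using hc) (by simpa using ht) k
    · intro k _
      exact hb _ ((List.pairwise_append.1 hsort).1.sublist (List.take_sublist _ c)) (by simp [hc])
    · intro k hk hsuf
      exact ih _ (by simp; lia) _ rfl t
        (hsort.sublist ((List.drop_sublist _ c).append_right t)) hsuf (by simpa using hcut.drop _)

theorem vanishesOffMixedAlternating (h : IsMomentCumulantPair r f b)
    (hb : VanishesOffAlternating p r b) : VanishesOffMixedAlternating p r f := by
  intro s
  induction hN : s.length using Nat.strong_induction_on generalizing s with
  | _ N ih =>
    intro hsort hmix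
    have hs : s ≠ [] := by rintro rfl; exact hmix trivial
    rw [h.eq_sum s hs hsort]
    refine Finset.sum_eq_zero fun k hk => mul_eq_zero_of_not_isMixedAlternating hmix ?_ ?_
    · exact hb _ (hsort.sublist (List.take_sublist _ s)) (by simp [hs])
    · exact ih _ (by simp at hk ⊢; lia) _ rfl (hsort.sublist (List.drop_sublist _ s))

theorem cumulant_eq_zero_of_not_isMixedAlternating (h : IsMomentCumulantPair r f b)
    (hf : VanishesOffMixedAlternating p r f) {s : List α} (hsort : s.Pairwise r) (hs : s ≠ [])
    (hmix : ¬ IsMixedAlternating (s.map p))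
    (hb : ∀ k, k + 1 < s.length → ¬ IsAlternating ((s.take (k + 1)).map p) →
      b (s.take (k + 1)) = 0) : b s = 0 := by
  have hsum := h.sum_eq_cumulant (c := []) hs fun k hk =>
    mul_eq_zero_of_not_isMixedAlternating hmix (hb k hk)
      (hf _ (hsort.sublist (List.drop_sublist _ s)))
  simp only [List.nil_append, ← h.eq_sum s hs hsort] at hsum
  rw [← hsum, hf s hsort hmix]

theorem cumulant_append_eq_zero_of_isCut (h : IsMomentCumulantPair r f b)
    (hmul : MultiplicativeAtCuts p r f) {c t : List α} (hsort : (c ++ t).Pairwise r)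
    (hc : c ≠ []) (ht : t ≠ []) (halt : IsAlternating (c.map p))
    (hcut : IsCut (c.map p) (t.map p))
    (hb : ∀ k < c.length, ¬ IsAlternating ((c.take (k + 1)).map p) → b (c.take (k + 1)) = 0)
    (hb' : ∀ k, k + 1 < t.length → ¬ IsAlternating ((c ++ t.take (k + 1)).map p) →
      b (c ++ t.take (k + 1)) = 0) : b (c ++ t) = 0 := by
  have hsum := h.append_eq_mul_add hsort hc ht halt hb fun k _ hsuf =>
    hmul _ t (hsort.sublist ((List.drop_sublist _ c).append_right t)) hsuf
      (by simpa using hcut.drop _)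
  rw [hmul c t hsort halt hcut, left_eq_add, h.sum_eq_cumulant ht] at hsum
  · exact hsum
  · intro k hk
    rw [hb' k hk, zero_mul]
    simpa using hcut.not_isAlternating_append_take (by simpa using hc) (by simpa using ht) k

theorem vanishesOffAlternating (h : IsMomentCumulantPair r f b)
    (hf : VanishesOffMixedAlternating p r f) (hmul : MultiplicativeAtCuts p r f) :
    VanishesOffAlternating p r b := by
  intro s
  induction hN : s.length using Nat.strong_induction_on generalizing s with
  | _ N ih =>
    intro hsort hs hnalt
    by_cases hmix : IsMixedAlternating (s.map p)
    · obtain ⟨c', t', hct, hc', halt, hcut⟩ := hmix.exists_eq_append (by simpa using hs)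
      obtain ⟨c, t, rfl, rfl, rfl⟩ := List.map_eq_append_iff.1 hct
      have hc : c ≠ [] := by simpa using hc'
      have ht : t ≠ [] := by rintro rfl; exact hnalt (by simpa using halt)
      have htlen := List.length_pos_iff.2 ht
      rw [List.length_append] at hN
      refine h.cumulant_append_eq_zero_of_isCut hmul hsort hc ht halt hcut (fun k _ => ?_)
        (fun k hk => ?_)
      · exact ih _ (by simp; lia) _ rfl
          ((List.pairwise_append.1 hsort).1.sublist (List.take_sublist _ c)) (by simp [hc])
      · exact ih _ (by simp; lia) _ rfl
          (hsort.sublist ((List.take_sublist _ t).append_left c)) (by simp [hc])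
    · exact h.cumulant_eq_zero_of_not_isMixedAlternating hf hsort hs hmix fun k hk =>
        ih _ (by simp; lia) _ rfl (hsort.sublist (List.take_sublist _ s)) (by simp [hs])

theorem vanishesOffAlternating_iff (h : IsMomentCumulantPair r f b) :
    VanishesOffAlternating p r b ↔
      VanishesOffMixedAlternating p r f ∧ FactorizesCanonically p r f :=
  ⟨fun hb => ⟨h.vanishesOffMixedAlternating hb,
      (h.multiplicativeAtCuts hb).factorizesCanonically h.nil⟩,
    fun ⟨hf, hfac⟩ => h.vanishesOffAlternating hf (hfac.multiplicativeAtCuts hf h.nil)⟩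

end IsMomentCumulantPair

end MomentCumulant

/-- `P` is a partition of `U` into blocks that are convex for `r`, that is, intervals of `U` when
`r` is a strict total order on `U`. -/
structure IsIntervalPartition {α : Type*} (r : α → α → Prop) (U : Finset α)
    (P : Finset (Finset α)) : Prop where
  empty_notMem : ∅ ∉ P
  subset : ∀ V ∈ P, V ⊆ U
  exists_mem : ∀ i ∈ U, ∃ V ∈ P, i ∈ V
  eq_of_mem : ∀ V ∈ P, ∀ V' ∈ P, ∀ i ∈ V, i ∈ V' → V = V'
  convex : ∀ V ∈ P, ∀ i ∈ V, ∀ j ∈ U, ∀ k ∈ V, r i j → r j k → j ∈ V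

open scoped Classical in
/-- The finset of interval partitions of `U`, the generic form of `BIset`. -/
noncomputable def intervalPartitions {α : Type*} (r : α → α → Prop) (U : Finset α) :
    Finset (Finset (Finset α)) :=
  U.powerset.powerset.filter (IsIntervalPartition r U)

/-- The sum over all interval partitions of `U` of the products of the weights `h V` of the
blocks. -/
noncomputable def intervalPartitionSum {α R : Type*} [CommSemiring R] (r : α → α → Prop)
    (h : Finset α → R) (U : Finset α) : R :=
  ∑ P ∈ intervalPartitions r U, ∏ V ∈ P, h V

/-- The Boolean cumulant at `U` of the moment function `g` with respect to the order `r`. -/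
noncomputable def booleanCumulant {α R : Type*} [CommRing R] (r : α → α → Prop)
    (g : Finset α → R) (U : Finset α) : R :=
  ∑ P ∈ intervalPartitions r U, (-1) ^ (P.card - 1) * ∏ V ∈ P, g V

section IntervalPartition

variable {α : Type*} {r : α → α → Prop} {U A D : Finset α} {P : Finset (Finset α)}

theorem mem_intervalPartitions : P ∈ intervalPartitions r U ↔ IsIntervalPartition r U P := by
  simp only [intervalPartitions, Finset.mem_filter, Finset.mem_powerset, and_iff_right_iff_imp]
  exact fun hP V hV => Finset.mem_powerset.2 (hP.subset V hV)

theorem intervalPartitions_empty : intervalPartitions r ∅ = {∅} := by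
  ext P
  rw [mem_intervalPartitions, Finset.mem_singleton]
  constructor
  · refine fun hP => Finset.eq_empty_of_forall_notMem fun V hV => hP.empty_notMem ?_
    rwa [← Finset.subset_empty.1 (hP.subset V hV)]
  · rintro rfl
    constructor <;> simp

theorem IsIntervalPartition.nonempty (hP : IsIntervalPartition r U P) (hU : U.Nonempty) :
    P.Nonempty :=
  let ⟨i, hi⟩ := hU
  let ⟨V, hV, _⟩ := hP.exists_mem i hi
  ⟨V, hV⟩

theorem IsIntervalPartition.notMem_of_disjoint (hP : IsIntervalPartition r A P) (hD : D.Nonempty)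
    (hAD : Disjoint A D) : D ∉ P := fun hDP =>
  hD.ne_empty (disjoint_self.1 (hAD.mono_left (hP.subset D hDP)))

theorem disjoint_of_forall_rel [Std.Asymm r] (hAD : ∀ a ∈ A, ∀ d ∈ D, r a d) : Disjoint A D :=
  Finset.disjoint_left.2 fun a ha hd => Std.Irrefl.irrefl a (hAD a ha a hd)

theorem intervalPartitionSum_empty {R : Type*} [CommSemiring R] (h : Finset α → R) :
    intervalPartitionSum r h ∅ = 1 := by
  simp [intervalPartitionSum, intervalPartitions_empty]

theorem booleanCumulant_eq_neg_intervalPartitionSum {R : Type*} [CommRing R] (g : Finset α → R)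
    (hU : U.Nonempty) :
    booleanCumulant r g U = -intervalPartitionSum r (fun V => -g V) U := by
  rw [booleanCumulant, intervalPartitionSum, ← Finset.sum_neg_distrib]
  refine Finset.sum_congr rfl fun P hP => ?_
  obtain ⟨m, hm⟩ := Nat.exists_eq_add_one.2
    ((mem_intervalPartitions.1 hP).nonempty hU).card_pos
  rw [Finset.prod_neg, hm, Nat.add_sub_cancel, pow_succ, mul_neg_one, neg_mul, neg_neg]

variable [DecidableEq α]

theorem IsIntervalPartition.insert [Std.Asymm r] (hP : IsIntervalPartition r A P)
    (hD : D.Nonempty) (hAD : ∀ a ∈ A, ∀ d ∈ D, r a d) :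
    IsIntervalPartition r (A ∪ D) (insert D P) := by
  have hasymm : ∀ a b, r a b → ¬ r b a := fun _ _ => Std.Asymm.asymm _ _
  obtain ⟨hempty, hsub, hex, heq, hconv⟩ := hP
  constructor <;> grind [Finset.Nonempty]

theorem IsIntervalPartition.erase (hP : IsIntervalPartition r (A ∪ D) P) (hDP : D ∈ P)
    (hAD : Disjoint A D) : IsIntervalPartition r A (P.erase D) := by
  rw [Finset.disjoint_left] at hAD
  obtain ⟨hempty, hsub, hex, heq, hconv⟩ := hP
  constructor <;> grind

theorem sum_intervalPartitions_filter_mem [Std.Asymm r] {R : Type*} [CommSemiring R]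
    (h : Finset α → R) (hD : D.Nonempty) (hAD : ∀ a ∈ A, ∀ d ∈ D, r a d) :
    ∑ P ∈ intervalPartitions r (A ∪ D) with D ∈ P, ∏ V ∈ P, h V =
      intervalPartitionSum r h A * h D := by
  have hdisj := disjoint_of_forall_rel hAD
  rw [intervalPartitionSum, Finset.sum_mul]
  refine Finset.sum_bij' (fun P _ => P.erase D) (fun P _ => insert D P) ?_ ?_ ?_ ?_ ?_ <;>
    simp only [Finset.mem_filter, mem_intervalPartitions, Finset.mem_insert_self, and_true,
      and_imp]
  · exact fun P hP hDP => hP.erase hDP hdisj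
  · exact fun P hP => hP.insert hD hAD
  · exact fun P _ hDP => Finset.insert_erase hDP
  · exact fun P hP => Finset.erase_insert (hP.notMem_of_disjoint hD hdisj)
  · exact fun P _ hDP => (Finset.prod_erase_mul P h hDP).symm

theorem exists_toFinset_drop_eq {s : List α} (hsort : s.Pairwise r) (hs : s ≠ []) {V : Finset α}
    (hV : V ⊆ s.toFinset) (hlast : s.getLast hs ∈ V)
    (hconv : ∀ i ∈ V, ∀ j ∈ s.toFinset, ∀ k ∈ V, r i j → r j k → j ∈ V) :
    ∃ k < s.length, (s.drop k).toFinset = V := by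
  classical
  have hex : ∃ k, ∃ hk : k < s.length, s[k] ∈ V :=
    ⟨s.length - 1, by have := List.length_pos_iff.2 hs; lia, by rwa [← List.getLast_eq_getElem hs]⟩
  obtain ⟨hk, hkV⟩ := Nat.find_spec hex
  have hmin : ∀ j (hj : j < s.length), s[j] ∈ V → Nat.find hex ≤ j :=
    fun j hj hjV => Nat.find_min' hex ⟨hj, hjV⟩
  generalize Nat.find hex = k at hk hkV hmin
  rw [List.pairwise_iff_getElem] at hsort
  refine ⟨k, hk, Finset.Subset.antisymm ?_ ?_⟩
  · intro x hx
    obtain ⟨j, hj, rfl⟩ := List.mem_drop_iff_getElem.1 (List.mem_toFinset.1 hx)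
    rw [List.getLast_eq_getElem] at hlast
    rcases Nat.eq_zero_or_pos j with rfl | hj0
    · exact hkV
    rcases (Nat.le_sub_one_of_lt hj).eq_or_lt with hjl | hjl
    · simpa only [Nat.add_comm k, hjl] using hlast
    · exact hconv _ hkV _ (by simp) _ hlast (hsort _ _ _ _ (by lia)) (hsort _ _ _ _ (by lia))
  · intro x hx
    obtain ⟨j, hj, rfl⟩ := List.mem_iff_getElem.1 (List.mem_toFinset.1 (hV hx))
    rw [List.mem_toFinset, List.mem_drop_iff_getElem]
    exact ⟨j - k, by lia, by grind⟩

theorem IsIntervalPartition.existsUnique_drop_mem [Std.Asymm r] {s : List α}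
    (hP : IsIntervalPartition r s.toFinset P) (hsort : s.Pairwise r) (hs : s ≠ []) :
    ∃! k, k < s.length ∧ (s.drop k).toFinset ∈ P := by
  have hnd : s.Nodup := hsort.nodup
  have hlast : ∀ k < s.length, s.getLast hs ∈ (s.drop k).toFinset := fun k hk => by
    rw [List.mem_toFinset, ← List.getLast_drop (i := k) (by simpa using hk)]
    exact List.getLast_mem _
  obtain ⟨V, hV, hlastV⟩ := hP.exists_mem (s.getLast hs) (by simp)
  obtain ⟨k, hk, rfl⟩ :=
    exists_toFinset_drop_eq hsort hs (hP.subset V hV) hlastV (hP.convex V hV)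
  refine ⟨k, ⟨hk, hV⟩, fun k' ⟨hk', hV'⟩ => ?_⟩
  have hcard := congrArg Finset.card (hP.eq_of_mem _ hV _ hV' _ hlastV (hlast k' hk'))
  simp only [List.toFinset_card_of_nodup hnd.drop, List.length_drop] at hcard
  lia

theorem rel_of_mem_take_of_mem_drop {s : List α} (hsort : s.Pairwise r) (k : ℕ) :
    ∀ a ∈ (s.take k).toFinset, ∀ d ∈ (s.drop k).toFinset, r a d := by
  rw [← List.take_append_drop k s, List.pairwise_append] at hsort
  simpa using hsort.2.2

theorem intervalPartitionSum_toFinset [Std.Asymm r] {R : Type*} [CommSemiring R]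
    (h : Finset α → R) {s : List α} (hsort : s.Pairwise r) (hs : s ≠ []) :
    intervalPartitionSum r h s.toFinset = ∑ k ∈ Finset.range s.length,
      intervalPartitionSum r h (s.take k).toFinset * h (s.drop k).toFinset := by
  calc intervalPartitionSum r h s.toFinset
    _ = ∑ P ∈ intervalPartitions r s.toFinset, ∑ k ∈ Finset.range s.length,
          if (s.drop k).toFinset ∈ P then ∏ V ∈ P, h V else 0 := by
      refine Finset.sum_congr rfl fun P hP => ?_
      obtain ⟨k, ⟨hk, hkP⟩, huniq⟩ :=
        (mem_intervalPartitions.1 hP).existsUnique_drop_mem hsort hs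
      rw [Finset.sum_eq_single_of_mem k (Finset.mem_range.2 hk), if_pos hkP]
      exact fun j hj hjk => if_neg fun hjP => hjk (huniq j ⟨Finset.mem_range.1 hj, hjP⟩)
    _ = ∑ k ∈ Finset.range s.length, ∑ P ∈ intervalPartitions r s.toFinset with
          (s.drop k).toFinset ∈ P, ∏ V ∈ P, h V := by
      rw [Finset.sum_comm]
      simp only [Finset.sum_filter]
    _ = _ := by
      refine Finset.sum_congr rfl fun k hk => ?_
      rw [← sum_intervalPartitions_filter_mem h (by simpa using hk)
        (rel_of_mem_take_of_mem_drop hsort k), ← List.toFinset_append, List.take_append_drop]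

theorem isMomentCumulantPair_booleanCumulant [Std.Asymm r] {R : Type*} [CommRing R]
    (g : Finset α → R) (hg : g ∅ = 1) :
    IsMomentCumulantPair r (fun s => g s.toFinset) fun s => booleanCumulant r g s.toFinset where
  nil := hg
  eq_sum s hs hsort := by
    have hrec := intervalPartitionSum_toFinset (fun V => -g V) hsort hs
    have hsum : ∑ k ∈ Finset.range (s.length + 1),
        intervalPartitionSum r (fun V => -g V) (s.take k).toFinset *
          -g (s.drop k).toFinset = 0 := by
      rw [Finset.sum_range_succ, ← hrec]
      simp [hg]
    rw [Finset.sum_range_succ'] at hsum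
    simp only [List.take_zero, List.drop_zero, List.toFinset_nil, intervalPartitionSum_empty,
      one_mul, add_neg_eq_zero] at hsum
    rw [← hsum]
    refine Finset.sum_congr rfl fun k _ => ?_
    rw [booleanCumulant_eq_neg_intervalPartitionSum g (by simpa using hs), neg_mul, mul_neg]

theorem intervalPartitionSum_toFinset_map [Std.Asymm r] {R β : Type*} [CommSemiring R]
    [DecidableEq β] {r' : β → β → Prop} {e : β → α} (he : ∀ i j, r' i j → r (e i) (e j))
    (h : Finset α → R) (h' : Finset β → R) (hh : ∀ s : List β, h' s.toFinset = h (s.map e).toFinset)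
    {s : List β} (hsort : s.Pairwise r') :
    intervalPartitionSum r' h' s.toFinset = intervalPartitionSum r h (s.map e).toFinset := by
  have : Std.Asymm r' := ⟨fun i j hij hji => Std.Asymm.asymm _ _ (he i j hij) (he j i hji)⟩
  induction hN : s.length using Nat.strong_induction_on generalizing s with
  | _ N ih =>
    rcases eq_or_ne s [] with rfl | hs
    · simp [intervalPartitionSum_empty]
    rw [intervalPartitionSum_toFinset h' hsort hs, intervalPartitionSum_toFinset h
      (List.pairwise_map.2 (hsort.imp (he _ _))) (by simpa using hs), List.length_map]
    refine Finset.sum_congr rfl fun k hk => ?_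
    rw [ih _ (by simp at hk ⊢; lia) (hsort.sublist (List.take_sublist k s)) rfl, hh,
      List.map_take, List.map_drop]

theorem booleanCumulant_toFinset_map [Std.Asymm r] {R β : Type*} [CommRing R]
    [DecidableEq β] {r' : β → β → Prop} {e : β → α} (he : ∀ i j, r' i j → r (e i) (e j))
    (g : Finset α → R) (g' : Finset β → R) (hg : ∀ s : List β, g' s.toFinset = g (s.map e).toFinset)
    {s : List β} (hsort : s.Pairwise r') (hs : s ≠ []) :
    booleanCumulant r' g' s.toFinset = booleanCumulant r g (s.map e).toFinset := by
  rw [booleanCumulant_eq_neg_intervalPartitionSum g' (by simpa using hs),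
    booleanCumulant_eq_neg_intervalPartitionSum g (by simpa using hs),
    intervalPartitionSum_toFinset_map he (fun V => -g V) (fun V => -g' V) (fun s => by rw [hg])
      hsort]

end IntervalPartition

theorem one_le_card_toFinset {α : Type*} [DecidableEq α] {s : List α} (hs : s ≠ []) :
    1 ≤ s.toFinset.card :=
  Finset.card_pos.2 ((List.toFinset_nonempty_iff s).2 hs)

theorem chiRank_injective {n : ℕ} (χ : Fin n → Bool) : Function.Injective (chiRank χ) := by
  intro i j h
  unfold chiRank at h
  ext
  split_ifs at h <;> lia

instance instAsymmChiLT {n : ℕ} (χ : Fin n → Bool) : Std.Asymm (chiLT χ) :=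
  ⟨fun _ _ => lt_asymm⟩

theorem chiLT_comp_of_chiLT {n m : ℕ} (χ : Fin n → Bool) {e : Fin m → Fin n} (he : StrictMono e)
    {i j : Fin m} (hij : chiLT (χ ∘ e) i j) : chiLT χ (e i) (e j) := by
  have hlt : (e i : ℕ) < e j ↔ (i : ℕ) < j := he.lt_iff_lt
  have hgt : (e j : ℕ) < e i ↔ (j : ℕ) < i := he.lt_iff_lt
  unfold chiLT chiRank at hij ⊢
  dsimp only [Function.comp_apply] at hij
  split_ifs at hij ⊢ <;> lia

theorem chiSorted_perm {n : ℕ} (χ : Fin n → Bool) : (chiSorted χ).Perm (List.finRange n) :=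
  List.mergeSort_perm _ _

theorem toFinset_chiSorted {n : ℕ} (χ : Fin n → Bool) : (chiSorted χ).toFinset = Finset.univ := by
  ext i
  simp [(chiSorted_perm χ).mem_iff]

theorem length_chiSorted {n : ℕ} (χ : Fin n → Bool) : (chiSorted χ).length = n := by
  rw [(chiSorted_perm χ).length_eq, List.length_finRange]

theorem chiSorted_ne_nil {n : ℕ} (hn : 1 ≤ n) (χ : Fin n → Bool) : chiSorted χ ≠ [] :=
  List.ne_nil_of_length_pos (by rwa [length_chiSorted])

theorem nodup_chiSorted {n : ℕ} (χ : Fin n → Bool) : (chiSorted χ).Nodup :=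
  (chiSorted_perm χ).nodup_iff.2 (List.nodup_finRange n)

theorem pairwise_chiSorted {n : ℕ} (χ : Fin n → Bool) : (chiSorted χ).Pairwise (chiLT χ) := by
  have hle : (chiSorted χ).Pairwise fun i j => decide (chiRank χ i ≤ chiRank χ j) = true := by
    apply List.pairwise_mergeSort
    · simpa using fun i j k => le_trans
    · simpa using fun i j => le_total _ _
  refine (hle.and (nodup_chiSorted χ)).imp fun ⟨h, hne⟩ => ?_
  exact (of_decide_eq_true h).lt_of_ne ((chiRank_injective χ).ne hne)

theorem intervalPartitions_univ {n : ℕ} (χ : Fin n → Bool) :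
    intervalPartitions (chiLT χ) Finset.univ = BIset χ := by
  ext P
  simp only [mem_intervalPartitions, BIset, Finset.mem_filter, Finset.mem_univ, true_and]
  constructor
  · rintro ⟨hempty, -, hex, heq, hconv⟩
    refine ⟨⟨hempty, fun i => ?_⟩, fun V hV i j k hi hk => hconv V hV i hi j (by simp) k hk⟩
    obtain ⟨V, hV, hi⟩ := hex i (Finset.mem_univ i)
    exact ⟨V, ⟨hV, hi⟩, fun V' hV' => heq V' hV'.1 V hV i hV'.2 hi⟩
  · rintro ⟨⟨hempty, huniq⟩, hconv⟩
    refine ⟨hempty, fun V _ => Finset.subset_univ V, fun i _ => (huniq i).exists, ?_, ?_⟩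
    · exact fun V hV V' hV' i hi hi' => (huniq i).unique ⟨hV, hi⟩ ⟨hV', hi'⟩
    · exact fun V hV i hi j _ k hk => hconv V hV i j k hi hk

/-- The star-parities of the letters of `w`, the companion of `chiW`. -/
abbrev starW {n : ℕ} (w : Fin n → Letter) : Fin n → Bool := fun i => (w i).2

/-- The subword `w|_V`, re-indexed by `Fin V.card`. -/
def restrictWord {n : ℕ} (w : Fin n → Letter) (V : Finset (Fin n)) : Fin V.card → Letter :=
  w ∘ V.orderEmbOfFin rfl

/-- The moment function of `μ` on lists of positions of `w`. -/
noncomputable def wordMoment (μ : FreeAlgebra ℂ Letter → ℂ) {n : ℕ} (w : Fin n → Letter)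
    (s : List (Fin n)) : ℂ :=
  μ (ZwordOn w s.toFinset)

/-- The Boolean `(l, r)`-cumulant of `μ` at the subword of `w` on a list of positions. -/
noncomputable def wordCumulant (μ : FreeAlgebra ℂ Letter → ℂ) {n : ℕ} (w : Fin n → Letter)
    (s : List (Fin n)) : ℂ :=
  booleanCumulant (chiLT (chiW w)) (fun V => μ (ZwordOn w V)) s.toFinset

section Word

variable {n : ℕ} {w : Fin n → Letter} {μ : FreeAlgebra ℂ Letter → ℂ}

theorem isMomentCumulantPair_word (hμ1 : μ 1 = 1) (w : Fin n → Letter) :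
    IsMomentCumulantPair (chiLT (chiW w)) (wordMoment μ w) (wordCumulant μ w) :=
  isMomentCumulantPair_booleanCumulant (fun V => μ (ZwordOn w V)) (by simp [ZwordOn, hμ1])

theorem alternatingW_iff : AlternatingW w ↔ IsAlternating (wordStarSeq w) := by
  rw [IsAlternating, wordStarSeq, List.length_map, length_chiSorted]
  rfl

theorem isCanonFact_iff {L : List (List (Fin n))} :
    IsCanonFact w L ↔
      L.flatten = chiSorted (chiW w) ∧ IsCanonical (L.map (List.map (starW w))) := by
  rw [IsCanonical, List.forall_mem_map, List.isChain_map]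
  simp only [IsAlternating, List.length_map, ne_eq, List.map_eq_nil_iff]
  rfl

theorem mixedAlternatingW_iff : MixedAlternatingW w ↔ IsMixedAlternating (wordStarSeq w) := by
  rw [isMixedAlternating_iff_exists_isCanonical]
  simp only [MixedAlternatingW, isCanonFact_iff]
  constructor
  · rintro ⟨L, hL, hcan⟩
    exact ⟨L.map (List.map (starW w)), by rw [← List.map_flatten, hL, wordStarSeq], hcan⟩
  · rintro ⟨L, hL, hcan⟩
    obtain ⟨L', rfl, hL'⟩ := exists_map_map_eq_of_map_eq_flatten hL.symm
    exact ⟨L', hL', hcan⟩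

theorem zword_eq_zwordOn_univ (w : Fin n → Letter) : Zword w = ZwordOn w Finset.univ := by
  rw [Zword, ZwordOn, Fin.sort_univ, List.ofFn_eq_map]

theorem zwordOn_restrictWord (w : Fin n → Letter) (V : Finset (Fin n)) (A : Finset (Fin V.card)) :
    ZwordOn (restrictWord w V) A =
      ZwordOn w (A.map (V.orderEmbOfFin rfl).toEmbedding) := by
  rw [ZwordOn, ZwordOn, ← Finset.map_sort (V.orderEmbOfFin rfl).toEmbedding A (· ≤ ·) (· ≤ ·)
    (by simp), List.map_map]
  rfl

theorem zword_restrictWord (w : Fin n → Letter) (V : Finset (Fin n)) :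
    Zword (restrictWord w V) = ZwordOn w V := by
  rw [zword_eq_zwordOn_univ, zwordOn_restrictWord, Finset.map_orderEmbOfFin_univ]

theorem wordMoment_restrictWord {V : Finset (Fin n)} (s : List (Fin V.card)) :
    wordMoment μ (restrictWord w V) s = wordMoment μ w (s.map (V.orderEmbOfFin rfl)) := by
  rw [wordMoment, zwordOn_restrictWord, wordMoment]
  congr 2
  ext
  simp

theorem map_chiSorted_restrictWord {s : List (Fin n)} (hsort : s.Pairwise (chiLT (chiW w))) :
    (chiSorted (chiW (restrictWord w s.toFinset))).map (s.toFinset.orderEmbOfFin rfl) = s := by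
  have hsort' : ((chiSorted (chiW (restrictWord w s.toFinset))).map
      (s.toFinset.orderEmbOfFin rfl)).Pairwise (chiLT (chiW w)) :=
    List.pairwise_map.2 ((pairwise_chiSorted _).imp
      (chiLT_comp_of_chiLT (chiW w) (s.toFinset.orderEmbOfFin rfl).strictMono))
  refine List.Perm.eq_of_pairwise (fun _ _ _ _ h h' => (lt_asymm h h').elim) hsort' hsort ?_
  refine List.perm_of_nodup_nodup_toFinset_eq hsort'.nodup hsort.nodup ?_
  ext i
  rw [List.mem_toFinset, List.mem_map]
  simp only [(chiSorted_perm _).mem_iff, List.mem_finRange, true_and]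
  exact Set.ext_iff.1 (Finset.range_orderEmbOfFin s.toFinset rfl) i

theorem wordStarSeq_restrictWord {s : List (Fin n)} (hsort : s.Pairwise (chiLT (chiW w))) :
    wordStarSeq (restrictWord w s.toFinset) = s.map (starW w) := by
  conv_rhs => rw [← map_chiSorted_restrictWord hsort, List.map_map]
  rfl

theorem bcumW_eq_wordCumulant (w : Fin n → Letter) :
    BcumW μ w = wordCumulant μ w (chiSorted (chiW w)) := by
  rw [wordCumulant, toFinset_chiSorted, booleanCumulant, intervalPartitions_univ]
  rfl

theorem bcumW_restrictWord {s : List (Fin n)} (hsort : s.Pairwise (chiLT (chiW w)))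
    (hs : s ≠ []) : BcumW μ (restrictWord w s.toFinset) = wordCumulant μ w s := by
  have hlt : ∀ i j, chiLT (chiW (restrictWord w s.toFinset)) i j →
      chiLT (chiW w) (s.toFinset.orderEmbOfFin rfl i) (s.toFinset.orderEmbOfFin rfl j) :=
    fun _ _ => chiLT_comp_of_chiLT (chiW w) (s.toFinset.orderEmbOfFin rfl).strictMono
  rw [bcumW_eq_wordCumulant, wordCumulant, booleanCumulant_toFinset_map hlt
    (fun V => μ (ZwordOn w V)) _ wordMoment_restrictWord (pairwise_chiSorted _)
    (chiSorted_ne_nil (one_le_card_toFinset hs) _), map_chiSorted_restrictWord hsort]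
  rfl

theorem etaDiagonalDist_iff :
    EtaDiagonalDist μ ↔ ∀ (n : ℕ) (w : Fin n → Letter),
      VanishesOffAlternating (starW w) (chiLT (chiW w)) (wordCumulant μ w) := by
  refine ⟨fun h n w s hsort hs halt => ?_, fun h n hn w halt => ?_⟩
  · rw [← bcumW_restrictWord hsort hs]
    refine h _ (one_le_card_toFinset hs) _ ?_
    rwa [alternatingW_iff, wordStarSeq_restrictWord hsort]
  · rw [bcumW_eq_wordCumulant]
    exact h n w _ (pairwise_chiSorted _) (chiSorted_ne_nil hn _) (mt alternatingW_iff.2 halt)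

theorem forall_zword_eq_zero_iff :
    (∀ n : ℕ, 1 ≤ n → ∀ w : Fin n → Letter, ¬ MixedAlternatingW w → μ (Zword w) = 0) ↔
      ∀ (n : ℕ) (w : Fin n → Letter),
        VanishesOffMixedAlternating (starW w) (chiLT (chiW w)) (wordMoment μ w) := by
  refine ⟨fun h n w s hsort hmix => ?_, fun h n _ w hmix => ?_⟩
  · have hs : s ≠ [] := by rintro rfl; exact hmix trivial
    rw [wordMoment, ← zword_restrictWord]
    refine h _ (one_le_card_toFinset hs) _ ?_
    rwa [mixedAlternatingW_iff, wordStarSeq_restrictWord hsort]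
  · rw [zword_eq_zwordOn_univ, ← toFinset_chiSorted (chiW w)]
    exact h n w _ (pairwise_chiSorted _) (mt mixedAlternatingW_iff.2 hmix)

theorem forall_zword_eq_prod_iff (hμ1 : μ 1 = 1) :
    (∀ n : ℕ, 1 ≤ n → ∀ w : Fin n → Letter, ∀ L : List (List (Fin n)), IsCanonFact w L →
        μ (Zword w) = (L.map fun c => μ (ZwordOn w c.toFinset)).prod) ↔
      ∀ (n : ℕ) (w : Fin n → Letter),
        FactorizesCanonically (starW w) (chiLT (chiW w)) (wordMoment μ w) := by
  refine ⟨fun h n w L hsort hL => ?_, fun h n _ w L hL => ?_⟩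
  · rcases eq_or_ne L.flatten [] with hnil | hnil
    · cases L with
      | nil => simp [wordMoment, ZwordOn, hμ1]
      | cons c L =>
        exact absurd (List.append_eq_nil_iff.1 hnil).1
          (by simpa using (hL.1 _ List.mem_cons_self).1)
    obtain ⟨L', hL', hflat⟩ :=
      exists_map_map_eq_of_map_eq_flatten (map_chiSorted_restrictWord hsort)
    rw [wordMoment, ← zword_restrictWord,
      h _ (one_le_card_toFinset hnil) _ L' (isCanonFact_iff.2 ⟨hflat, ?_⟩)]
    · conv_rhs => rw [← hL', List.map_map]
      exact congrArg List.prod (List.map_congr_left fun c _ => wordMoment_restrictWord c)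
    · rwa [← hL', List.map_map, List.map_comp_map] at hL
  · rw [isCanonFact_iff] at hL
    rw [zword_eq_zwordOn_univ, ← toFinset_chiSorted (chiW w), ← hL.1]
    exact h n w L (by rw [hL.1]; exact pairwise_chiSorted _) hL.2

end Word

/-- A `*`-distribution is η-diagonal iff (i) its moments vanish at every word that is not
mixed alternating, and (ii) its moments factorize along the canonical factorization of
every mixed alternating word. -/
theorem etaDiagonal_iff_moments
    (μ : FreeAlgebra ℂ Letter →ₗ[ℂ] ℂ) (hμ1 : μ 1 = 1) :
    EtaDiagonalDist (fun z => μ z) ↔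
      ((∀ n : ℕ, 1 ≤ n → ∀ w : Fin n → Letter, ¬ MixedAlternatingW w → μ (Zword w) = 0) ∧
       (∀ n : ℕ, 1 ≤ n → ∀ w : Fin n → Letter, ∀ chunks : List (List (Fin n)),
         IsCanonFact w chunks →
           μ (Zword w) = (chunks.map (fun c => μ (ZwordOn w c.toFinset))).prod)) := by
  rw [etaDiagonalDist_iff, forall_zword_eq_zero_iff, forall_zword_eq_prod_iff hμ1]
  simp only [← forall_and]
  exact forall₂_congr fun n w => (isMomentCumulantPair_word hμ1 w).vanishesOffAlternating_iff
end

section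
/- Let A be a unital C*-algebra and φ a faithful tracial state on A. Let x, y ∈ A, and let u ∈ A be a Haar unitary such that {u} and {x, y} are *-free. Then the pair (x, y) satisfies condition (3.6) if and only if the pairs (x, y) and (ux, uy) have the same bi-*-distribution. -/
section
variable {A : Type*} [Ring A] [Algebra ℂ A] [StarRing A] [StarModule ℂ A]

/-- The alternating product `x^{ω(1)} ⋯ x^{ω(k₁)} y^{ω(k₁+1)} ⋯ y^{ω(m)}`:
the first `k₁` letters are from `{x, x*}`, the remaining ones from `{y, y*}`,
with star-parities given by `ω` (`true` = starred). -/
def altProd (x y : A) (m k₁ : ℕ) (ω : Fin m → Bool) : A :=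
  (List.ofFn (fun t : Fin m =>
    if t.val < k₁ then (if ω t then star x else x)
    else (if ω t then star y else y))).prod

/-- The factor of the sets `P_{i,j}(x,y)`: for odd length the alternating product itself,
for even length the centered alternating product `z - φ(z)·1`. -/
noncomputable def facElt (φ : A → ℂ) (x y : A) (m k₁ : ℕ) (ω : Fin m → Bool) : A :=
  if Odd m then altProd x y m k₁ ω
  else altProd x y m k₁ ω - φ (altProd x y m k₁ ω) • (1 : A)

/-- Condition (3.6): the expectations of the admissible products
`p_{i₁,i₂} p_{i₂,i₃} ⋯ p_{i_{n-1},i_n}` of factors from the sets `P_{i,j}(x,y)` vanish.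
Factor `i` is an alternating word of length `len i ≥ 1` with `kk i` letters from
`{x, x*}` followed by `len i - kk i` letters from `{y, y*}`; the chain condition links the
second index of each factor with the first index of the next one; and the factors are
ordered so that either (i) the `x`-only factors precede the `y`-only factors, or (ii)
exactly one factor mixes letters of both types, with `x`-only factors before it and
`y`-only factors after it. -/
noncomputable def Condition36 (φ : A → ℂ) (x y : A) : Prop :=
  ∀ N : ℕ, 1 ≤ N → ∀ len kk : Fin N → ℕ, ∀ ω : (i : Fin N) → Fin (len i) → Bool,
    (∀ i, 1 ≤ len i) →
    (∀ i, kk i ≤ len i) →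
    (∀ i, (List.ofFn (ω i)).Chain' (· ≠ ·)) →
    (∀ i : Fin N, ∀ h : i.val + 1 < N,
      (List.ofFn (ω ⟨i.val + 1, h⟩)).headD false =
        (if Odd (len i) then (List.ofFn (ω i)).headD false
          else !(List.ofFn (ω i)).headD false)) →
    ((∃ m : ℕ, m ≤ N ∧ (∀ i : Fin N, i.val < m → kk i = len i) ∧
        (∀ i : Fin N, m ≤ i.val → kk i = 0)) ∨
     (∃ m : Fin N, (∀ i : Fin N, i.val < m.val → kk i = len i) ∧
        0 < kk m ∧ kk m < len m ∧ (∀ i : Fin N, m.val < i.val → kk i = 0))) →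
    φ (List.ofFn (fun i => facElt φ x y (len i) (kk i) (ω i))).prod = 0

/-- The pairs `(x, y)` and `(x', y')` have the same bi-`*`-distribution. -/
def SameBiDist (φ : A → ℂ) (x y x' y' : A) : Prop :=
  ∀ n : ℕ, 1 ≤ n → ∀ k : ℕ, k ≤ n → ∀ ω : Fin n → Bool,
    φ (altProd x y n k ω) = φ (altProd x' y' n k ω)

/-- A Haar unitary. -/
def IsHaarUnitary (φ : A → ℂ) (u : A) : Prop :=
  u * star u = 1 ∧ star u * u = 1 ∧
  ∀ n : ℕ, 1 ≤ n → φ (u ^ n) = 0 ∧ φ ((star u) ^ n) = 0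

/-- `*`-freeness of a family of subsets: alternating products of centered elements of the
generated unital `*`-subalgebras have zero expectation. -/
def FreeFamily (φ : A → ℂ) {ι : Type*} (S : ι → Set A) : Prop :=
  ∀ m : ℕ, 1 ≤ m → ∀ idx : Fin m → ι,
    (∀ i : Fin m, ∀ h : i.val + 1 < m, idx i ≠ idx ⟨i.val + 1, h⟩) →
    ∀ a : Fin m → A,
      (∀ i, a i ∈ StarAlgebra.adjoin ℂ (S (idx i)) ∧ φ (a i) = 0) →
      φ (List.ofFn a).prod = 0

end

/-!
Expanding the centered factors of a product as in condition (3.6) gives the moment of the full word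
plus moments of words from which some even alternating factors have been deleted. Hence, for two
pairs whose even alternating words have equal moments, the products of condition (3.6) have equal
expectations for both pairs if and only if all bi-`*`-moments agree, by induction on the length.

The pairs `(x, y)` and `(ux, uy)` have the same even alternating moments, since there all letters
`u` cancel inside the word or, by traciality, at its two ends. Moreover `(ux, uy)` always satisfies
condition (3.6): split each factor in the algebra of `x` and `y` into its centered part, which
separates two powers of `u`, and its expectation, which vanishes unless the two adjacent powers of
`u` have exponents of the same sign and merge into a nontrivial power. What remains is a linear
combination of alternating products of centered elements, which freeness annihilates.
-/

section Words

variable {ι A : Type*}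

/-- `a` or `star a`, as prescribed by the flag `s`; this interprets the exponents in `{1, *}`, with
`true` standing for `*`. -/
def starIf [Star A] (s : Bool) (a : A) : A := if s then star a else a

/-- The value at the family `z` of a `*`-word, whose letters are pairs of an index and a star
flag. -/
def wordEval [Monoid A] [Star A] (z : ι → A) (w : List (ι × Bool)) : A :=
  (w.map fun a ↦ starIf a.2 (z a.1)).prod

/-- A `*`-word is alternating if neighbouring letters have different star flags. -/
def IsAlternatingWord (w : List (ι × Bool)) : Prop := w.IsChain fun a b ↦ a.2 ≠ b.2

/-- The star flag of the first letter of a word, with the value `false` for the empty word. -/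
def firstStar (w : List (ι × Bool)) : Bool := (w.map Prod.snd).headD false

/-- The star flag of the last letter of a word, with the value `false` for the empty word. -/
def lastStar (w : List (ι × Bool)) : Bool := (w.map Prod.snd).getLastD false

/-- A list of nonempty alternating words cut exactly where their concatenation fails to alternate.
These are the chains `p_{i₁,i₂} p_{i₂,i₃} ⋯` of condition (3.6): a factor in `P_{i,j}` starts with
a starred letter iff `i = 1`, and the next one starts with a starred letter iff `j = 1`, that is,
iff the factor ends with a starred letter. -/
structure IsAlternatingChain (L : List (List (ι × Bool))) : Prop where
  ne_nil : ∀ w ∈ L, w ≠ []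
  alternating : ∀ w ∈ L, IsAlternatingWord w
  linked : L.IsChain fun v w ↦ lastStar v = firstStar w

lemma IsAlternatingChain.tail {w : List (ι × Bool)} {L : List (List (ι × Bool))}
    (h : IsAlternatingChain (w :: L)) : IsAlternatingChain L where
  ne_nil v hv := h.ne_nil v (List.mem_cons_of_mem w hv)
  alternating v hv := h.alternating v (List.mem_cons_of_mem w hv)
  linked := h.linked.tail

@[simp]
lemma firstStar_cons (a : ι × Bool) (w : List (ι × Bool)) : firstStar (a :: w) = a.2 := rfl

@[simp]
lemma lastStar_singleton (a : ι × Bool) : lastStar [a] = a.2 := rfl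

@[simp]
lemma lastStar_cons_cons (a b : ι × Bool) (w : List (ι × Bool)) :
    lastStar (a :: b :: w) = lastStar (b :: w) := by
  simp [lastStar]

lemma firstStar_eq_head (w : List (ι × Bool)) (hw : w ≠ []) : firstStar w = (w.head hw).2 := by
  cases w with
  | nil => contradiction
  | cons => rfl

lemma lastStar_eq_getLast (w : List (ι × Bool)) (hw : w ≠ []) :
    lastStar w = (w.getLast hw).2 := by
  simp [lastStar, List.getLast?_eq_some_getLast hw]

lemma IsAlternatingWord.lastStar_eq {w : List (ι × Bool)} (h : IsAlternatingWord w)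
    (hw : w ≠ []) : lastStar w = if Odd w.length then firstStar w else !firstStar w := by
  induction w with
  | nil => contradiction
  | cons a w ih =>
    cases w with
    | nil => simp
    | cons b w =>
      obtain ⟨hab, hbw⟩ := List.isChain_cons_cons.1 h
      have hflip : a.2 = !b.2 := Bool.eq_not.2 hab
      rw [lastStar_cons_cons, ih hbw (List.cons_ne_nil b w)]
      by_cases hodd : Odd w.length <;> simp [hodd, hflip, Nat.odd_add_one]

lemma exists_isAlternatingChain_flatten_eq (w : List (ι × Bool)) :
    ∃ L, IsAlternatingChain L ∧ L.flatten = w := by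
  let r : ι × Bool → ι × Bool → Bool := fun a b ↦ a.2 != b.2
  refine ⟨w.splitBy r, ⟨fun v ↦ List.ne_nil_of_mem_splitBy, fun v hv ↦ ?_, ?_⟩,
    List.flatten_splitBy r w⟩
  · exact (List.isChain_of_mem_splitBy hv).imp fun a b hab ↦ by simpa [r] using hab
  · refine (List.isChain_getLast_head_splitBy r w).imp fun u v ⟨hu, hv, huv⟩ ↦ ?_
    rw [lastStar_eq_getLast u hu, firstStar_eq_head v hv]
    simpa [r] using huv

section Monoid

variable [Monoid A] [Star A] (z : ι → A)

@[simp]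
lemma wordEval_nil : wordEval z [] = 1 := rfl

lemma wordEval_cons (a : ι × Bool) (w : List (ι × Bool)) :
    wordEval z (a :: w) = starIf a.2 (z a.1) * wordEval z w := by
  simp [wordEval]

lemma wordEval_append (v w : List (ι × Bool)) :
    wordEval z (v ++ w) = wordEval z v * wordEval z w := by
  simp [wordEval]

end Monoid

end Words

section CenteredWords

variable {ι A B : Type*} [Ring A] [Algebra ℂ A] [Star A] [Ring B] [Algebra ℂ B] [Star B]

/-- The factor attached to an alternating word in condition (3.6): its value if the length is odd,
its centered value if the length is even. -/
noncomputable def centeredEval (φ : A → ℂ) (z : ι → A) (w : List (ι × Bool)) : A :=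
  if Odd w.length then wordEval z w else wordEval z w - φ (wordEval z w) • (1 : A)

/-- Condition (3.6) for a family `z` and the class `P` of words: the expectations of the products
`p_{i₁,i₂} p_{i₂,i₃} ⋯` whose underlying word lies in `P` vanish. -/
def CenteredProdsVanish (φ : A → ℂ) (z : ι → A) (P : List (ι × Bool) → Prop) : Prop :=
  ∀ L, L ≠ [] → IsAlternatingChain L → P L.flatten → φ (L.map (centeredEval φ z)).prod = 0

variable {φ : A →ₗ[ℂ] ℂ} {ψ : B →ₗ[ℂ] ℂ} {z : ι → A} {z' : ι → B}

lemma apply_mul_centeredEval_mul_of_even (φ : A →ₗ[ℂ] ℂ) (z : ι → A) {w : List (ι × Bool)}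
    (hw : ¬ Odd w.length) (a b : A) :
    φ (a * (centeredEval φ z w * b)) =
      φ (a * wordEval z w * b) - φ (wordEval z w) * φ (a * b) := by
  simp [centeredEval, hw, sub_mul, mul_sub, mul_assoc]

lemma apply_centeredEval_eq_zero_or_lastStar_eq (hφ1 : φ 1 = 1) (z : ι → A)
    {w : List (ι × Bool)} (hw : w ≠ []) (halt : IsAlternatingWord w) :
    φ (centeredEval φ z w) = 0 ∨ lastStar w = firstStar w := by
  by_cases hodd : Odd w.length
  · exact .inr (by simp [halt.lastStar_eq hw, hodd])
  · exact .inl (by simp [centeredEval, hodd, hφ1])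

lemma apply_mul_prod_centeredEval_sub_eq (L : List (List (ι × Bool))) (p : List (ι × Bool))
    (hne : ∀ w ∈ L, w ≠ [])
    (heven : ∀ w ∈ L, ¬ Odd w.length → φ (wordEval z w) = ψ (wordEval z' w))
    (hshort : ∀ v, v.Sublist (p ++ L.flatten) → v.length < (p ++ L.flatten).length →
      φ (wordEval z v) = ψ (wordEval z' v)) :
    φ (wordEval z p * (L.map (centeredEval φ z)).prod) -
        ψ (wordEval z' p * (L.map (centeredEval ψ z')).prod) =
      φ (wordEval z (p ++ L.flatten)) - ψ (wordEval z' (p ++ L.flatten)) := by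
  induction L generalizing p with
  | nil => simp
  | cons w L ih =>
    have hne' : ∀ v ∈ L, v ≠ [] := fun v hv ↦ hne v (List.mem_cons_of_mem w hv)
    have heven' : ∀ v ∈ L, ¬ Odd v.length → φ (wordEval z v) = ψ (wordEval z' v) :=
      fun v hv ↦ heven v (List.mem_cons_of_mem w hv)
    have absorbed := ih (p ++ w) hne' heven' (by simpa using hshort)
    rw [List.append_assoc, ← List.flatten_cons, wordEval_append, wordEval_append] at absorbed
    simp only [List.map_cons, List.prod_cons]
    by_cases hodd : Odd w.length
    · simpa [centeredEval, hodd, mul_assoc] using absorbed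
    · have hsub : (p ++ L.flatten).Sublist (p ++ (w :: L).flatten) := by simp
      have hlt : (p ++ L.flatten).length < (p ++ (w :: L).flatten).length := by
        simpa using List.length_pos_iff.2 (hne w List.mem_cons_self)
      have removed : φ (wordEval z p * (L.map (centeredEval φ z)).prod) =
          ψ (wordEval z' p * (L.map (centeredEval ψ z')).prod) := by
        rw [← sub_eq_zero, ih p hne' heven' fun v hv _ ↦
          hshort v (hv.trans hsub) (hv.length_le.trans_lt hlt), hshort _ hsub hlt, sub_self]
      rw [apply_mul_centeredEval_mul_of_even φ z hodd, apply_mul_centeredEval_mul_of_even ψ z' hodd,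
        heven w List.mem_cons_self hodd, removed, sub_sub_sub_cancel_right, absorbed]

theorem centeredProdsVanish_iff_of_even {P : List (ι × Bool) → Prop}
    (hP : ∀ v w, v.Sublist w → P w → P v)
    (heven : ∀ w, IsAlternatingWord w → ¬ Odd w.length → φ (wordEval z w) = ψ (wordEval z' w))
    (hψ : CenteredProdsVanish ψ z' P) :
    CenteredProdsVanish φ z P ↔ ∀ w, P w → φ (wordEval z w) = ψ (wordEval z' w) := by
  have prod_sub_eq (L : List (List (ι × Bool))) (hL : IsAlternatingChain L)
      (hshort : ∀ v, v.Sublist L.flatten → v.length < L.flatten.length →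
        φ (wordEval z v) = ψ (wordEval z' v)) :
      φ (L.map (centeredEval φ z)).prod - ψ (L.map (centeredEval ψ z')).prod =
        φ (wordEval z L.flatten) - ψ (wordEval z' L.flatten) := by
    simpa using apply_mul_prod_centeredEval_sub_eq L [] hL.ne_nil
      (fun w hw ↦ heven w (hL.alternating w hw)) hshort
  constructor
  · intro hφ w hw
    induction hn : w.length using Nat.strong_induction_on generalizing w with
    | _ n ih =>
      subst hn
      obtain ⟨L, hL, rfl⟩ := exists_isAlternatingChain_flatten_eq w
      rcases eq_or_ne L [] with rfl | hne
      · exact heven [] List.isChain_nil (by simp)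
      · have hsub := prod_sub_eq L hL fun v hv hlt ↦ ih _ hlt v (hP v _ hv hw) rfl
        rw [hφ L hne hL hw, hψ L hne hL hw, sub_self] at hsub
        exact sub_eq_zero.1 hsub.symm
  · intro h L hne hL hw
    have hsub := prod_sub_eq L hL fun v hv _ ↦ h v (hP v _ hv hw)
    rwa [h _ hw, hψ L hne hL hw, sub_self, sub_zero] at hsub

end CenteredWords

section UnitaryMultiple

variable {ι A : Type*}

/-- The factor in front of `a^s` in `(u a)^s`. -/
def leftUnitary [One A] (u : A) (s : Bool) : A := if s then 1 else u

/-- The factor behind `a^s` in `(u a)^s`. -/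
def rightUnitary [One A] [Star A] (u : A) (s : Bool) : A := if s then star u else 1

section Monoid

variable [Monoid A]

lemma leftUnitary_mul_rightUnitary [Star A] (u : A) (s : Bool) :
    leftUnitary u s * rightUnitary u s = starIf s u := by
  cases s <;> simp [starIf, leftUnitary, rightUnitary]

lemma rightUnitary_mul_leftUnitary_of_ne [Star A] {u : A} (hu : star u * u = 1) {s t : Bool}
    (hst : s ≠ t) :
    rightUnitary u s * leftUnitary u t = 1 := by
  cases s <;> cases t <;> simp_all [leftUnitary, rightUnitary]

variable [StarMul A]

lemma starIf_mul (u a : A) (s : Bool) :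
    starIf s (u * a) = leftUnitary u s * starIf s a * rightUnitary u s := by
  cases s <;> simp [starIf, leftUnitary, rightUnitary]

variable {u : A}

lemma wordEval_unitary_mul (z : ι → A) (hu : star u * u = 1) {w : List (ι × Bool)} (hw : w ≠ [])
    (halt : IsAlternatingWord w) :
    wordEval (fun i ↦ u * z i) w =
      leftUnitary u (firstStar w) * wordEval z w * rightUnitary u (lastStar w) := by
  induction w with
  | nil => contradiction
  | cons a w ih =>
    cases w with
    | nil => simp [wordEval_cons, starIf_mul]
    | cons b w =>
      obtain ⟨hab, hbw⟩ := List.isChain_cons_cons.1 halt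
      calc wordEval (fun i ↦ u * z i) (a :: b :: w)
        _ = leftUnitary u a.2 * starIf a.2 (z a.1) * (rightUnitary u a.2 * leftUnitary u b.2) *
              wordEval z (b :: w) * rightUnitary u (lastStar (b :: w)) := by
          rw [wordEval_cons, ih (List.cons_ne_nil b w) hbw, starIf_mul, firstStar_cons]
          simp only [mul_assoc]
        _ = _ := by
          rw [rightUnitary_mul_leftUnitary_of_ne hu hab, mul_one, wordEval_cons z a, firstStar_cons,
            lastStar_cons_cons, mul_assoc (leftUnitary u a.2)]

lemma apply_wordEval_unitary_mul_of_even {β : Type*} {τ : A → β}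
    (hτ : ∀ a b, τ (a * b) = τ (b * a)) (z : ι → A) (hu : star u * u = 1) {w : List (ι × Bool)}
    (halt : IsAlternatingWord w) (hodd : ¬ Odd w.length) :
    τ (wordEval (fun i ↦ u * z i) w) = τ (wordEval z w) := by
  rcases eq_or_ne w [] with rfl | hw
  · rfl
  · have hne : lastStar w ≠ firstStar w := by simp [halt.lastStar_eq hw, hodd]
    rw [wordEval_unitary_mul z hu hw halt, mul_assoc, hτ, mul_assoc,
      rightUnitary_mul_leftUnitary_of_ne hu hne, mul_one]

end Monoid

lemma centeredEval_unitary_mul [Ring A] [StarRing A] [Algebra ℂ A] {φ : A → ℂ}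
    (htr : ∀ a b, φ (a * b) = φ (b * a)) (z : ι → A) {u : A} (hu : star u * u = 1)
    (hu' : u * star u = 1) {w : List (ι × Bool)} (hw : w ≠ []) (halt : IsAlternatingWord w) :
    centeredEval φ (fun i ↦ u * z i) w =
      leftUnitary u (firstStar w) * centeredEval φ z w * rightUnitary u (lastStar w) := by
  by_cases hodd : Odd w.length
  · simp [centeredEval, hodd, wordEval_unitary_mul z hu hw halt]
  · have hone : leftUnitary u (firstStar w) * rightUnitary u (lastStar w) = 1 := by
      rw [halt.lastStar_eq hw, if_neg hodd]
      cases firstStar w <;> simp [leftUnitary, rightUnitary, hu']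
    simp only [centeredEval, hodd, if_false, apply_wordEval_unitary_mul_of_even htr z hu halt hodd]
    rw [wordEval_unitary_mul z hu hw halt, mul_sub, sub_mul, mul_smul_comm, mul_one, smul_mul_assoc,
      hone]

end UnitaryMultiple

section Freeness

variable {A : Type*} [Ring A] [Algebra ℂ A] [StarRing A] [StarModule ℂ A]

/-- `IsAlternatingProd φ S i p`: `p` is a nonempty product of centered elements of the unital
`*`-subalgebras generated by the sets `S j`, neighbouring factors coming from different subalgebras
and the first factor from the `i`-th one. -/
inductive IsAlternatingProd (φ : A → ℂ) {ι : Type*} (S : ι → Set A) : ι → A → Prop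
  | single {i : ι} {a : A} (ha : a ∈ StarAlgebra.adjoin ℂ (S i)) (hφa : φ a = 0) :
      IsAlternatingProd φ S i a
  | mul {i j : ι} {a p : A} (ha : a ∈ StarAlgebra.adjoin ℂ (S i)) (hφa : φ a = 0) (hij : i ≠ j)
      (hp : IsAlternatingProd φ S j p) : IsAlternatingProd φ S i (a * p)

lemma IsAlternatingProd.exists_ofFn {φ : A → ℂ} {ι : Type*} {S : ι → Set A} {i : ι} {p : A}
    (hp : IsAlternatingProd φ S i p) :
    ∃ (m : ℕ) (idx : Fin (m + 1) → ι) (a : Fin (m + 1) → A), idx 0 = i ∧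
      (∀ k : Fin (m + 1), ∀ h : k.val + 1 < m + 1, idx k ≠ idx ⟨k.val + 1, h⟩) ∧
      (∀ k, a k ∈ StarAlgebra.adjoin ℂ (S (idx k)) ∧ φ (a k) = 0) ∧ (List.ofFn a).prod = p := by
  induction hp with
  | @single i a ha hφa =>
    exact ⟨0, fun _ ↦ i, fun _ ↦ a, rfl, fun k hk ↦ by omega, fun _ ↦ ⟨ha, hφa⟩, by simp⟩
  | @mul i j a p ha hφa hij _ ih =>
    obtain ⟨m, idx, b, rfl, hidx, hb, rfl⟩ := ih
    refine ⟨m + 1, Fin.cons i idx, Fin.cons a b, rfl, Fin.cases (fun _ ↦ hij) fun k hk ↦ ?_,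
      Fin.cases ⟨ha, hφa⟩ hb, by simp [List.ofFn_succ]⟩
    exact hidx k (Nat.lt_of_succ_lt_succ hk)

lemma FreeFamily.apply_eq_zero {φ : A → ℂ} {ι : Type*} {S : ι → Set A} (hS : FreeFamily φ S)
    {i : ι} {p : A} (hp : IsAlternatingProd φ S i p) : φ p = 0 := by
  obtain ⟨m, idx, a, -, hidx, ha, rfl⟩ := hp.exists_ofFn
  exact hS (m + 1) m.succ_pos idx hidx a ha

end Freeness

section HaarUnitary

variable {A : Type*}

lemma IsHaarUnitary.apply_starIf_pow_succ [Ring A] [StarRing A] {φ : A → ℂ} {u : A}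
    (hu : IsHaarUnitary φ u) (s : Bool) (k : ℕ) : φ (starIf s u ^ (k + 1)) = 0 := by
  have hk := hu.2.2 (k + 1) k.succ_pos
  cases s
  exacts [hk.1, hk.2]

lemma mul_mem_of_mem_span [Ring A] [Algebra ℂ A] {a q : A} {S : Set A} {M : Submodule ℂ A}
    (h : ∀ b ∈ S, a * b ∈ M) (hq : q ∈ Submodule.span ℂ S) : a * q ∈ M :=
  (Submodule.span_le (p := M.comap (LinearMap.mulLeft ℂ a))).2 h hq

variable [Ring A] [Algebra ℂ A] [StarRing A] [StarModule ℂ A]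

lemma starIf_mem_adjoin {S : Set A} {a : A} (ha : a ∈ S) (s : Bool) :
    starIf s a ∈ StarAlgebra.adjoin ℂ S := by
  have hmem := StarAlgebra.subset_adjoin ℂ S ha
  cases s
  exacts [hmem, star_mem hmem]

/-- The two sets whose freeness is assumed, in the indexing of the theorem: `{u}` has index
`true`. -/
abbrev unitaryPair (T : Set A) (u : A) : Bool → Set A := fun b ↦ if b then {u} else T

/-- The products `(uˢ)^(k+1) p` with `p` empty or an alternating product starting in the algebra
generated by `T`. -/
def powerHeads (φ : A → ℂ) (T : Set A) (u : A) (s : Bool) : Set A :=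
  {q | ∃ k p, (p = 1 ∨ IsAlternatingProd φ (unitaryPair T u) false p) ∧
    q = starIf s u ^ (k + 1) * p}

/-- The products spanning the possible values of `p_{i₁,i₂} p_{i₂,i₃} ⋯` for `u z`, where `z` is a
family in `T` and `s` is the star flag of the very first letter: `(u z)^*` starts with an element of
the algebra generated by `T`, in which case the centering may leave a power of `u*` in front. -/
def factorHeads (φ : A → ℂ) (T : Set A) (u : A) (s : Bool) : Set A :=
  powerHeads φ T u s ∪ {p | s = true ∧ IsAlternatingProd φ (unitaryPair T u) false p}

variable {φ : A →ₗ[ℂ] ℂ} {T : Set A} {u : A} {s t : Bool} {f p q : A}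

lemma starIf_mem_powerHeads : starIf s u ∈ powerHeads φ T u s :=
  ⟨0, 1, .inl rfl, by simp⟩

lemma starIf_mul_mem_powerHeads (hp : IsAlternatingProd φ (unitaryPair T u) false p) :
    starIf s u * p ∈ powerHeads φ T u s :=
  ⟨0, p, .inr hp, by simp⟩

lemma starIf_mul_mem_powerHeads_of_mem (hq : q ∈ powerHeads φ T u s) :
    starIf s u * q ∈ powerHeads φ T u s := by
  obtain ⟨k, p, hp, rfl⟩ := hq
  exact ⟨k + 1, p, hp, by rw [pow_succ' _ (k + 1), mul_assoc]⟩

lemma IsHaarUnitary.isAlternatingProd_of_mem_powerHeads (hu : IsHaarUnitary φ u)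
    (hq : q ∈ powerHeads φ T u s) : IsAlternatingProd φ (unitaryPair T u) true q := by
  obtain ⟨k, p, hp, rfl⟩ := hq
  have hmem : starIf s u ^ (k + 1) ∈ StarAlgebra.adjoin ℂ (unitaryPair T u true) :=
    pow_mem (starIf_mem_adjoin (Set.mem_singleton u) s) _
  have hzero : φ (starIf s u ^ (k + 1)) = 0 := hu.apply_starIf_pow_succ s k
  rcases hp with rfl | hp
  · simpa using IsAlternatingProd.single hmem hzero
  · exact .mul hmem hzero (by simp) hp

lemma IsHaarUnitary.apply_eq_zero_of_mem_span_factorHeads (hu : IsHaarUnitary φ u)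
    (hfree : FreeFamily φ (unitaryPair T u)) (hq : q ∈ Submodule.span ℂ (factorHeads φ T u s)) :
    φ q = 0 := by
  refine (Submodule.span_le (p := LinearMap.ker φ)).2 ?_ hq
  rintro p (hp | ⟨-, hp⟩)
  exacts [hfree.apply_eq_zero (hu.isAlternatingProd_of_mem_powerHeads hp), hfree.apply_eq_zero hp]

lemma starIf_mul_mem_span_powerHeads
    (hq : q ∈ Submodule.span ℂ (insert 1 (factorHeads φ T u s))) :
    starIf s u * q ∈ Submodule.span ℂ (powerHeads φ T u s) := by
  refine mul_mem_of_mem_span (fun b hb ↦ Submodule.subset_span ?_) hq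
  rcases hb with rfl | hb | ⟨-, hb⟩
  · simpa using starIf_mem_powerHeads
  · exact starIf_mul_mem_powerHeads_of_mem hb
  · exact starIf_mul_mem_powerHeads hb

lemma rightUnitary_mul_mem_span
    (hq : q ∈ Submodule.span ℂ (insert 1 (factorHeads φ T u s))) :
    rightUnitary u s * q ∈ Submodule.span ℂ (insert 1 (powerHeads φ T u s)) := by
  cases s with
  | false => simpa [rightUnitary, factorHeads] using hq
  | true => exact Submodule.span_mono (Set.subset_insert _ _) (starIf_mul_mem_span_powerHeads hq)

lemma IsHaarUnitary.mul_mem_span_isAlternatingProd (hu : IsHaarUnitary φ u)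
    (hf : f ∈ StarAlgebra.adjoin ℂ T) (hφf : φ f = 0)
    (hq : q ∈ Submodule.span ℂ (insert 1 (powerHeads φ T u s))) :
    f * q ∈ Submodule.span ℂ {p | IsAlternatingProd φ (unitaryPair T u) false p} := by
  refine mul_mem_of_mem_span (fun b hb ↦ Submodule.subset_span ?_) hq
  rcases hb with rfl | hb
  · rw [mul_one]
    exact .single (i := false) hf hφf
  · exact .mul (i := false) hf hφf (by simp) (hu.isAlternatingProd_of_mem_powerHeads hb)

lemma leftUnitary_mul_mem_span_factorHeads
    (hq : q ∈ Submodule.span ℂ {p | IsAlternatingProd φ (unitaryPair T u) false p}) :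
    leftUnitary u s * q ∈ Submodule.span ℂ (factorHeads φ T u s) := by
  refine mul_mem_of_mem_span (fun b hb ↦ Submodule.subset_span ?_) hq
  cases s with
  | false => exact .inl (starIf_mul_mem_powerHeads hb)
  | true => exact .inr ⟨rfl, by simpa [leftUnitary] using hb⟩

/-- Split `f` into its centered part and its expectation: the centered part keeps the neighbouring
powers of `u` apart, while the expectation survives only if `s = t`, when those powers have
exponents of the same sign and cannot cancel. -/
lemma IsHaarUnitary.mul_mem_span_factorHeads (hu : IsHaarUnitary φ u) (hφ1 : φ 1 = 1)
    (hf : f ∈ StarAlgebra.adjoin ℂ T) (hst : φ f = 0 ∨ t = s)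
    (hq : q ∈ Submodule.span ℂ (insert 1 (factorHeads φ T u t))) :
    leftUnitary u s * f * rightUnitary u t * q ∈ Submodule.span ℂ (factorHeads φ T u s) := by
  have hcentered : leftUnitary u s * ((f - φ f • 1) * (rightUnitary u t * q)) ∈
      Submodule.span ℂ (factorHeads φ T u s) :=
    leftUnitary_mul_mem_span_factorHeads <| hu.mul_mem_span_isAlternatingProd
      (sub_mem hf (SMulMemClass.smul_mem _ (one_mem _))) (by simp [hφ1])
      (rightUnitary_mul_mem_span hq)
  have hscalar : φ f • (leftUnitary u s * rightUnitary u t * q) ∈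
      Submodule.span ℂ (factorHeads φ T u s) := by
    rcases hst with hφf | rfl
    · simp [hφf]
    · rw [leftUnitary_mul_rightUnitary]
      exact Submodule.smul_mem _ _ (Submodule.span_mono Set.subset_union_left
        (starIf_mul_mem_span_powerHeads hq))
  have hsplit : leftUnitary u s * f * rightUnitary u t * q =
      leftUnitary u s * ((f - φ f • 1) * (rightUnitary u t * q)) +
        φ f • (leftUnitary u s * rightUnitary u t * q) := by
    simp [sub_mul, mul_sub, mul_assoc]
  exact hsplit ▸ add_mem hcentered hscalar

variable {ι : Type*} {z : ι → A}

lemma wordEval_mem_adjoin (z : ι → A) (w : List (ι × Bool)) :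
    wordEval z w ∈ StarAlgebra.adjoin ℂ (Set.range z) :=
  list_prod_mem <| List.forall_mem_map.2 fun a _ ↦ starIf_mem_adjoin (Set.mem_range_self a.1) a.2

lemma centeredEval_mem_adjoin (φ : A → ℂ) (z : ι → A) (w : List (ι × Bool)) :
    centeredEval φ z w ∈ StarAlgebra.adjoin ℂ (Set.range z) := by
  unfold centeredEval
  split_ifs
  exacts [wordEval_mem_adjoin z w,
    sub_mem (wordEval_mem_adjoin z w) (SMulMemClass.smul_mem _ (one_mem _))]

lemma IsHaarUnitary.centeredEval_mul_mem_span (hu : IsHaarUnitary φ u) (hφ1 : φ 1 = 1)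
    (htr : ∀ a b, φ (a * b) = φ (b * a)) {w : List (ι × Bool)} (hw : w ≠ [])
    (halt : IsAlternatingWord w)
    (hq : q ∈ Submodule.span ℂ (insert 1 (factorHeads φ (Set.range z) u (lastStar w)))) :
    centeredEval φ (fun i ↦ u * z i) w * q ∈
      Submodule.span ℂ (factorHeads φ (Set.range z) u (firstStar w)) := by
  rw [centeredEval_unitary_mul htr z hu.2.1 hu.1 hw halt]
  exact hu.mul_mem_span_factorHeads hφ1 (centeredEval_mem_adjoin φ z w)
    (apply_centeredEval_eq_zero_or_lastStar_eq hφ1 z hw halt) hq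

lemma IsHaarUnitary.prod_centeredEval_mem_span (hu : IsHaarUnitary φ u) (hφ1 : φ 1 = 1)
    (htr : ∀ a b, φ (a * b) = φ (b * a)) (w : List (ι × Bool)) (L : List (List (ι × Bool)))
    (hL : IsAlternatingChain (w :: L)) :
    ((w :: L).map (centeredEval φ fun i ↦ u * z i)).prod ∈
      Submodule.span ℂ (factorHeads φ (Set.range z) u (firstStar w)) := by
  rw [List.map_cons, List.prod_cons]
  refine hu.centeredEval_mul_mem_span hφ1 htr (hL.ne_nil w List.mem_cons_self)
    (hL.alternating w List.mem_cons_self) ?_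
  induction L generalizing w with
  | nil => exact Submodule.subset_span (.inl rfl)
  | cons v L ih =>
    rw [(List.isChain_cons_cons.1 hL.linked).1, List.map_cons, List.prod_cons]
    exact Submodule.span_mono (Set.subset_insert _ _) <|
      hu.centeredEval_mul_mem_span hφ1 htr (hL.tail.ne_nil v List.mem_cons_self)
        (hL.tail.alternating v List.mem_cons_self) (ih v hL.tail)

theorem IsHaarUnitary.centeredProdsVanish (hu : IsHaarUnitary φ u) (hφ1 : φ 1 = 1)
    (htr : ∀ a b, φ (a * b) = φ (b * a)) (hfree : FreeFamily φ (unitaryPair (Set.range z) u))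
    (P : List (ι × Bool) → Prop) : CenteredProdsVanish φ (fun i ↦ u * z i) P := by
  intro L hne hL _
  obtain ⟨w, L, rfl⟩ := List.exists_cons_of_ne_nil hne
  exact hu.apply_eq_zero_of_mem_span_factorHeads hfree
    (hu.prod_centeredEval_mem_span hφ1 htr w L hL)

end HaarUnitary

section BiWords

/-- A word in the letters `x` (index `false`) and `y` (index `true`) all of whose letters `x` or
`x*` precede all letters `y` or `y*`. -/
def IsBiWord (w : List (Bool × Bool)) : Prop := w.Pairwise fun a b ↦ a.1 ≤ b.1

/-- The word of the product `altProd x y m k ω`: `k` letters `x` or `x*` followed by `m - k` letters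
`y` or `y*`. -/
def biWord (m k : ℕ) (ω : Fin m → Bool) : List (Bool × Bool) :=
  List.ofFn fun t ↦ (decide (k ≤ t.val), ω t)

/-- The pair `(x, y)` as a family indexed by the first components of the letters of a bi-word. -/
def biPair {A : Type*} (x y : A) (b : Bool) : A := if b then y else x

lemma biPair_mul {A : Type*} [Mul A] (u x y : A) :
    biPair (u * x) (u * y) = fun b ↦ u * biPair x y b := by
  ext b
  cases b <;> rfl

lemma range_biPair {A : Type*} (x y : A) : Set.range (biPair x y) = {x, y} :=
  Bool.range_eq _

@[simp]
lemma length_biWord (m k : ℕ) (ω : Fin m → Bool) : (biWord m k ω).length = m := by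
  simp [biWord]

lemma map_snd_biWord (m k : ℕ) (ω : Fin m → Bool) :
    (biWord m k ω).map Prod.snd = List.ofFn ω := by
  rw [biWord, List.map_ofFn]
  rfl

lemma firstStar_biWord (m k : ℕ) (ω : Fin m → Bool) :
    firstStar (biWord m k ω) = (List.ofFn ω).headD false := by
  rw [firstStar, map_snd_biWord]

lemma biWord_ne_nil_iff {m k : ℕ} {ω : Fin m → Bool} : biWord m k ω ≠ [] ↔ 1 ≤ m := by
  rw [← List.length_pos_iff, length_biWord, Nat.succ_le_iff]

lemma isAlternatingWord_biWord_iff {m k : ℕ} {ω : Fin m → Bool} :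
    IsAlternatingWord (biWord m k ω) ↔ (List.ofFn ω).IsChain (· ≠ ·) := by
  rw [← map_snd_biWord m k ω, List.isChain_map]
  rfl

lemma isBiWord_biWord (m k : ℕ) (ω : Fin m → Bool) : IsBiWord (biWord m k ω) := by
  refine List.pairwise_ofFn.2 fun i j hij ↦ Bool.le_iff_imp.2 fun hi ↦ ?_
  simp only [decide_eq_true_eq] at hi ⊢
  omega

lemma IsBiWord.sublist {v w : List (Bool × Bool)} (hvw : v.Sublist w) (hw : IsBiWord w) :
    IsBiWord v :=
  List.Pairwise.sublist hvw hw

lemma IsBiWord.exists_eq_biWord {w : List (Bool × Bool)} (hw : IsBiWord w) :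
    ∃ (m k : ℕ) (ω : Fin m → Bool), k ≤ m ∧ w = biWord m k ω := by
  induction w with
  | nil => exact ⟨0, 0, Fin.elim0, le_rfl, rfl⟩
  | cons a w ih =>
    obtain ⟨ha, hw'⟩ := List.pairwise_cons.1 hw
    rcases a with ⟨_ | _, s⟩
    · obtain ⟨m, k, ω, hk, rfl⟩ := ih hw'
      exact ⟨m + 1, k + 1, Fin.cons s ω, by omega, by simp [biWord, List.ofFn_succ]⟩
    · refine ⟨w.length + 1, 0, Fin.cons s fun t ↦ w[t].2, by omega, ?_⟩
      have hfst (t : ℕ) (ht : t < w.length) : w[t].1 = true :=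
        Bool.le_iff_imp.1 (ha w[t] (List.getElem_mem ht)) rfl
      refine List.ext_getElem (by simp) fun t _ _ ↦ ?_
      rcases t with _ | t
      · simp [biWord]
      · simp [biWord, Prod.ext_iff, hfst]

lemma forall_mem_biWord_le_iff {m k m' k' : ℕ} {ω : Fin m → Bool} {ω' : Fin m' → Bool}
    (hk : k ≤ m) (hk' : k' ≤ m') :
    (∀ a ∈ biWord m k ω, ∀ b ∈ biWord m' k' ω', a.1 ≤ b.1) ↔ k = m ∨ k' = 0 := by
  simp only [biWord, List.forall_mem_ofFn_iff, Bool.le_iff_imp, decide_eq_true_eq]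
  constructor
  · intro h
    by_contra! hne
    have := h ⟨k, by omega⟩ ⟨0, by omega⟩ le_rfl
    simp at this
    omega
  · rintro (rfl | rfl) i j hi
    · omega
    · omega

/-- The left-hand side is the dichotomy (i)/(ii) of condition (3.6). -/
lemma exists_cut_iff {N : ℕ} {len kk : Fin N → ℕ} (hk : ∀ i, kk i ≤ len i) :
    ((∃ m : ℕ, m ≤ N ∧ (∀ i : Fin N, i.val < m → kk i = len i) ∧
        (∀ i : Fin N, m ≤ i.val → kk i = 0)) ∨
     (∃ m : Fin N, (∀ i : Fin N, i.val < m.val → kk i = len i) ∧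
        0 < kk m ∧ kk m < len m ∧ (∀ i : Fin N, m.val < i.val → kk i = 0))) ↔
      ∀ ⦃i j⦄, i < j → kk i = len i ∨ kk j = 0 := by
  constructor
  · rintro (⟨m, -, hfull, hzero⟩ | ⟨m, hfull, -, -, hzero⟩) i j hij
    · exact (lt_or_ge i.val m).imp (hfull i) fun hmi ↦ hzero j (hmi.trans hij.le)
    · exact (lt_or_ge i m).imp (hfull i) fun hmi ↦ hzero j (hmi.trans_lt hij)
  · intro h
    by_cases hex : ∃ i, kk i ≠ len i
    · obtain ⟨m, hm, hmin⟩ := exists_minimal_of_wellFoundedLT _ hex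
      have hfull (i : Fin N) (hi : i < m) : kk i = len i := by
        by_contra hne
        exact hi.not_ge (hmin hne hi.le)
      have hzero (i : Fin N) (hi : m < i) : kk i = 0 := (h hi).resolve_left hm
      rcases Nat.eq_zero_or_pos (kk m) with hm0 | hmpos
      · exact .inl ⟨m, m.2.le, hfull, fun i hi ↦ hi.eq_or_lt.elim
          (fun he ↦ Fin.ext he ▸ hm0) (hzero i)⟩
      · exact .inr ⟨m, hfull, hmpos, (hk m).lt_of_ne hm, hzero⟩
    · push Not at hex
      exact .inl ⟨N, le_rfl, fun i _ ↦ hex i, fun i hi ↦ absurd i.2 hi.not_gt⟩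

variable {N : ℕ} {len kk : Fin N → ℕ} {ω : (i : Fin N) → Fin (len i) → Bool}

lemma isBiWord_flatten_ofFn_iff (hk : ∀ i, kk i ≤ len i) :
    IsBiWord (List.ofFn fun i ↦ biWord (len i) (kk i) (ω i)).flatten ↔
      ∀ ⦃i j⦄, i < j → kk i = len i ∨ kk j = 0 := by
  rw [IsBiWord, List.pairwise_flatten, List.forall_mem_ofFn_iff, List.pairwise_ofFn]
  refine (and_iff_right fun i ↦ isBiWord_biWord _ _ _).trans ?_
  simp only [forall_mem_biWord_le_iff, hk]

lemma isAlternatingChain_ofFn_biWord_iff :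
    IsAlternatingChain (List.ofFn fun i ↦ biWord (len i) (kk i) (ω i)) ↔
      (∀ i, 1 ≤ len i) ∧ (∀ i, (List.ofFn (ω i)).IsChain (· ≠ ·)) ∧
        ∀ i : Fin N, ∀ h : i.val + 1 < N, (List.ofFn (ω ⟨i.val + 1, h⟩)).headD false =
          if Odd (len i) then (List.ofFn (ω i)).headD false
            else !(List.ofFn (ω i)).headD false := by
  have lastStar_eq (i : Fin N) (hlen : ∀ i, 1 ≤ len i)
      (halt : ∀ i, (List.ofFn (ω i)).IsChain (· ≠ ·)) :
      lastStar (biWord (len i) (kk i) (ω i)) = if Odd (len i) then (List.ofFn (ω i)).headD false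
        else !(List.ofFn (ω i)).headD false := by
    rw [(isAlternatingWord_biWord_iff.2 (halt i)).lastStar_eq (biWord_ne_nil_iff.2 (hlen i)),
      length_biWord, firstStar_biWord]
  constructor
  · rintro ⟨hne, halt, hlink⟩
    simp only [List.forall_mem_ofFn_iff, biWord_ne_nil_iff, isAlternatingWord_biWord_iff]
      at hne halt
    refine ⟨hne, halt, fun i h ↦ ?_⟩
    rw [← lastStar_eq i hne halt, List.isChain_ofFn.1 hlink i h, firstStar_biWord]
  · rintro ⟨hlen, halt, hlink⟩
    refine ⟨?_, ?_, List.isChain_ofFn.2 fun i h ↦ ?_⟩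
    · simpa [List.forall_mem_ofFn_iff, biWord_ne_nil_iff] using hlen
    · simpa [List.forall_mem_ofFn_iff, isAlternatingWord_biWord_iff] using halt
    · rw [firstStar_biWord, lastStar_eq ⟨i, _⟩ hlen halt, hlink ⟨i, _⟩ h]

end BiWords

section Translation

variable {A : Type*} [Ring A] [StarRing A]

lemma altProd_eq_wordEval (x y : A) (m k : ℕ) (ω : Fin m → Bool) :
    altProd x y m k ω = wordEval (biPair x y) (biWord m k ω) := by
  rw [altProd, wordEval, biWord, List.map_ofFn]
  congr 2
  funext t
  rcases lt_or_ge t.val k with h | h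
  · simp [starIf, biPair, h, h.not_ge]
  · simp [starIf, biPair, h, h.not_gt]

lemma facElt_eq_centeredEval [Algebra ℂ A] (φ : A → ℂ) (x y : A) (m k : ℕ) (ω : Fin m → Bool) :
    facElt φ x y m k ω = centeredEval φ (biPair x y) (biWord m k ω) := by
  simp only [facElt, centeredEval, altProd_eq_wordEval, length_biWord]

theorem sameBiDist_iff (φ : A → ℂ) (x y x' y' : A) :
    SameBiDist φ x y x' y' ↔
      ∀ w, IsBiWord w → φ (wordEval (biPair x y) w) = φ (wordEval (biPair x' y') w) := by
  constructor
  · intro h w hw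
    obtain ⟨m, k, ω, hk, rfl⟩ := hw.exists_eq_biWord
    rcases Nat.eq_zero_or_pos m with rfl | hm
    · rfl
    · simpa only [altProd_eq_wordEval] using h m hm k hk ω
  · intro h m _ k _ ω
    simpa only [altProd_eq_wordEval] using h _ (isBiWord_biWord m k ω)

theorem condition36_iff_centeredProdsVanish [Algebra ℂ A] (φ : A → ℂ) (x y : A) :
    Condition36 φ x y ↔ CenteredProdsVanish φ (biPair x y) IsBiWord := by
  have prod_facElt {N : ℕ} (len kk : Fin N → ℕ) (ω : (i : Fin N) → Fin (len i) → Bool) :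
      (List.ofFn fun i ↦ facElt φ x y (len i) (kk i) (ω i)).prod =
        ((List.ofFn fun i ↦ biWord (len i) (kk i) (ω i)).map
          (centeredEval φ (biPair x y))).prod := by
    simp only [facElt_eq_centeredEval, List.map_ofFn, Function.comp_def]
  constructor
  · refine fun h ↦ List.forall_iff_forall_tuple.2 fun N W hne hL hW ↦ ?_
    choose len kk ω hk hbi using fun i ↦ IsBiWord.exists_eq_biWord <|
      (List.pairwise_flatten.1 hW).1 (W i) ((List.mem_ofFn' _ _).2 ⟨i, rfl⟩)
    obtain rfl : W = fun i ↦ biWord (len i) (kk i) (ω i) := funext hbi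
    obtain ⟨hlen, halt, hlink⟩ := isAlternatingChain_ofFn_biWord_iff.1 hL
    rw [← prod_facElt]
    exact h N (Nat.one_le_iff_ne_zero.2 (by simpa using hne)) len kk ω hlen hk halt hlink
      ((exists_cut_iff hk).2 ((isBiWord_flatten_ofFn_iff hk).1 hW))
  · intro h N hN len kk ω hlen hk halt hlink hcut
    rw [prod_facElt]
    exact h _ (by simpa using Nat.one_le_iff_ne_zero.1 hN)
      (isAlternatingChain_ofFn_biWord_iff.2 ⟨hlen, halt, hlink⟩)
      ((isBiWord_flatten_ofFn_iff hk).2 ((exists_cut_iff hk).1 hcut))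

end Translation

theorem condition36_iff_sameBiDist_general
    {A : Type*} [Ring A] [Algebra ℂ A] [StarRing A] [StarModule ℂ A]
    (φ : A →ₗ[ℂ] ℂ) (hφ1 : φ 1 = 1) (htr : ∀ a b : A, φ (a * b) = φ (b * a))
    (x y u : A) (hu : IsHaarUnitary φ u)
    (hfree : FreeFamily φ (fun b : Bool ↦ if b then {u} else {x, y})) :
    Condition36 φ x y ↔ SameBiDist φ x y (u * x) (u * y) := by
  rw [condition36_iff_centeredProdsVanish, sameBiDist_iff, biPair_mul]
  rw [← range_biPair x y] at hfree
  exact centeredProdsVanish_iff_of_even (fun _ _ ↦ IsBiWord.sublist)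
    (fun w halt hodd ↦ (apply_wordEval_unitary_mul_of_even htr (biPair x y) hu.2.1 halt hodd).symm)
    (hu.centeredProdsVanish hφ1 htr hfree IsBiWord)

/-- In a unital C*-algebra with a faithful tracial state, if `u` is a Haar unitary that
is `*`-free from `{x, y}`, then `(x, y)` satisfies condition (3.6) if and only if
`(x, y)` and `(ux, uy)` have the same bi-`*`-distribution. -/
theorem condition36_iff_sameBiDist
    {A : Type*} [NormedRing A] [StarRing A] [CStarRing A] [NormedAlgebra ℂ A]
    [CompleteSpace A] [StarModule ℂ A]
    (φ : A →ₗ[ℂ] ℂ) (hφ1 : φ 1 = 1) (hφs : ∀ a : A, φ (star a) = starRingEnd ℂ (φ a))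
    (hpos : ∀ a : A, 0 ≤ (φ (star a * a)).re ∧ (φ (star a * a)).im = 0)
    (hfaith : ∀ a : A, φ (star a * a) = 0 → a = 0)
    (htr : ∀ a b : A, φ (a * b) = φ (b * a))
    (x y u : A) (hu : IsHaarUnitary (fun z => φ z) u)
    (hfree : FreeFamily (fun z => φ z) (fun b : Bool => if b then {u} else {x, y})) :
    Condition36 (fun z => φ z) x y ↔
      SameBiDist (fun z => φ z) x y (u * x) (u * y) :=
  condition36_iff_sameBiDist_general φ hφ1 htr x y u hu hfree
end
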